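/- arXiv:1802.02023 — 4 statements merged into one kernel-verified Lean document; each statement's English description precedes it below -/
import Mathlib

section
/- For every real q ∈ (0, e^{−π}) one has 0 < z₄(q) < 1 and ∑_{n=0}^∞ ((1/2)_n)³/(n!)³ · z₄(q)ⁿ = θ₃(q)⁴. -/
open Real

/-- Jacobi theta null value `θ₂(q) = ∑_{n∈ℤ} q^{(n+1/2)²}`. -/
noncomputable def theta2 (q : ℝ) : ℝ := ∑' n : ℤ, q ^ (((n : ℝ) + 1 / 2) ^ 2)

/-- Jacobi theta null value `θ₃(q) = ∑_{n∈ℤ} q^{n²}`. -/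
noncomputable def theta3 (q : ℝ) : ℝ := ∑' n : ℤ, q ^ ((n : ℝ) ^ 2)

/-- Jacobi theta null value `θ₄(q) = ∑_{n∈ℤ} (−1)ⁿ q^{n²}`. -/
noncomputable def theta4 (q : ℝ) : ℝ := ∑' n : ℤ, (-1 : ℝ) ^ n * q ^ ((n : ℝ) ^ 2)

/-- The modular lambda function `λ(q) = θ₂(q)⁴/θ₃(q)⁴`. -/
noncomputable def modLambda (q : ℝ) : ℝ := theta2 q ^ 4 / theta3 q ^ 4

/-- `z₄(q) = 4λ(q)(1−λ(q))`. -/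
noncomputable def z4 (q : ℝ) : ℝ := 4 * modLambda q * (1 - modLambda q)

/-- `F₄(x,z) = ∑_{n=0}^∞ z^{n+x} · ((1/2+x)_n)³/((1+x)_n)³`. -/
noncomputable def F4 (x z : ℝ) : ℝ :=
  ∑' n : ℕ, z ^ ((n : ℝ) + x) *
    ((ascPochhammer ℝ n).eval (1 / 2 + x)) ^ 3 / ((ascPochhammer ℝ n).eval (1 + x)) ^ 3

/-- The differential operator `f ↦ q·f′(q)`. -/
noncomputable def qDeriv (f : ℝ → ℝ) : ℝ → ℝ := fun q => q * deriv f q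

/-- `σ₃(n)`, the sum of the cubes of the positive divisors of `n`. -/
def sigma3 (n : ℕ) : ℕ := ∑ d ∈ n.divisors, d ^ 3


lemma summ_abs {q : ℝ} (h0 : 0 < q) (h1 : q < 1) : Summable (fun n : ℤ => q ^ (|(n:ℝ)|)) := by
  apply Summable.of_nat_of_neg
  · simpa using summable_geometric_of_lt_one h0.le h1
  · simpa using summable_geometric_of_lt_one h0.le h1

lemma summ3 {q : ℝ} (h0 : 0 < q) (h1 : q < 1) : Summable (fun n : ℤ => q ^ ((n:ℝ)^2)) := by
  refine Summable.of_nonneg_of_le (fun n => by positivity) (fun n => ?_) (summ_abs h0 h1)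
  apply Real.rpow_le_rpow_of_exponent_ge h0 h1.le
  have : |n| ≤ n^2 := by
    rw [← sq_abs]; nlinarith [abs_nonneg n, Int.natAbs_mul_self' n, sq_abs n, Int.le_self_sq |n|]
  exact_mod_cast this

lemma summ2 {q : ℝ} (h0 : 0 < q) (h1 : q < 1) :
    Summable (fun n : ℤ => q ^ (((n:ℝ) + 1/2)^2)) := by
  refine Summable.of_nonneg_of_le (fun n => by positivity) (fun n => ?_)
    ((summ_abs h0 h1).mul_left (q⁻¹))
  rw [← Real.rpow_neg_one, ← Real.rpow_add h0]
  apply Real.rpow_le_rpow_of_exponent_ge h0 h1.le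
  have : -1 + |n| ≤ n^2 + n := by
    rcases abs_cases n with ⟨h, h'⟩ | ⟨h, h'⟩ <;> rw [h] <;> nlinarith
  have : (-1 + |(n:ℝ)|) ≤ (n:ℝ)^2 + n := by exact_mod_cast this
  nlinarith

lemma abs_neg_one_zpow' (n : ℤ) : |(-1:ℝ)^n| = 1 := by
  rw [abs_zpow]; simp

lemma summ4 {q : ℝ} (h0 : 0 < q) (h1 : q < 1) :
    Summable (fun n : ℤ => (-1:ℝ)^n * q ^ ((n:ℝ)^2)) := by
  apply Summable.of_norm
  refine (summ3 h0 h1).congr (fun n => ?_)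
  rw [norm_mul, Real.norm_eq_abs, Real.norm_eq_abs, abs_neg_one_zpow', one_mul, abs_of_nonneg (by positivity)]

lemma nsumm4 {q : ℝ} (h0 : 0 < q) (h1 : q < 1) :
    Summable (fun n : ℤ => ‖(-1:ℝ)^n * q ^ ((n:ℝ)^2)‖) := (summ4 h0 h1).norm

lemma theta3_sq {q : ℝ} (h0 : 0 < q) (h1 : q < 1) :
    HasSum (fun p : ℤ × ℤ => q ^ ((p.1:ℝ)^2 + (p.2:ℝ)^2)) (theta3 q ^ 2) := by
  have hs := (summ3 h0 h1).mul_of_nonneg (summ3 h0 h1) (fun n => by positivity) (fun n => by positivity)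
  have := (summ3 h0 h1).hasSum.mul (summ3 h0 h1).hasSum hs
  rw [sq, theta3]
  refine this.congr_fun ?_ |> id
  intro p
  simp only [Real.rpow_add h0]

lemma theta2_sq {q : ℝ} (h0 : 0 < q) (h1 : q < 1) :
    HasSum (fun p : ℤ × ℤ => q ^ (((p.1:ℝ)+1/2)^2 + ((p.2:ℝ)+1/2)^2)) (theta2 q ^ 2) := by
  have hs := (summ2 h0 h1).mul_of_nonneg (summ2 h0 h1) (fun n => by positivity) (fun n => by positivity)
  have := (summ2 h0 h1).hasSum.mul (summ2 h0 h1).hasSum hs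
  rw [sq, theta2]
  refine this.congr_fun ?_ |> id
  intro p
  show _ = _ * _
  simp only [Real.rpow_add h0]

lemma theta4_sq {q : ℝ} (h0 : 0 < q) (h1 : q < 1) :
    HasSum (fun p : ℤ × ℤ => (-1:ℝ)^(p.1+p.2) * q ^ ((p.1:ℝ)^2 + (p.2:ℝ)^2)) (theta4 q ^ 2) := by
  have hs := summable_mul_of_summable_norm (nsumm4 h0 h1) (nsumm4 h0 h1)
  have := (summ4 h0 h1).hasSum.mul (summ4 h0 h1).hasSum hs
  rw [sq, theta4]
  refine this.congr_fun ?_ |> id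
  intro p
  show _ = _ * _
  rw [Real.rpow_add h0, zpow_add₀ (by norm_num : (-1:ℝ) ≠ 0)]
  ring

lemma rpow_sq' {q : ℝ} (h0 : 0 < q) (x : ℝ) : (q^2) ^ x = q ^ (2 * x) := by
  rw [Real.rpow_mul h0.le]; norm_num

lemma id_add {q : ℝ} (h0 : 0 < q) (h1 : q < 1) :
    theta3 q ^ 2 + theta4 q ^ 2 = 2 * theta3 (q^2) ^ 2 := by
  have h := ((theta3_sq h0 h1).add (theta4_sq h0 h1)).tsum_eq
  have h0' : 0 < q^2 := by positivity
  have h1' : q^2 < 1 := by nlinarith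
  have h2 := ((theta3_sq h0' h1').mul_left 2).tsum_eq
  rw [← h, ← h2]
  let e : ℤ × ℤ → ℤ × ℤ := fun p => (p.1 + p.2, p.1 - p.2)
  have he : Function.Injective e := by
    rintro ⟨a, b⟩ ⟨c, d⟩ h
    simp only [e, Prod.mk.injEq] at h ⊢
    omega
  rw [← he.tsum_eq]
  · apply tsum_congr
    rintro ⟨a, b⟩
    simp only [e]
    rw [rpow_sq' h0]
    have : a + b + (a - b) = 2 * a := by ring
    rw [this, zpow_mul]
    push_cast
    norm_num
    rw [show (2 * ((a:ℝ)^2 + (b:ℝ)^2)) = ((a:ℝ)+b)^2 + ((a:ℝ)-b)^2 by ring]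
    ring
  · rintro ⟨m, n⟩ hmn
    rcases Int.even_or_odd (m + n) with hh | hh
    · obtain ⟨k, hk⟩ := hh
      refine ⟨(k, m - k), ?_⟩
      simp only [e, Prod.mk.injEq]; omega
    · exfalso; apply hmn
      simp [hh.neg_one_zpow]

lemma id_sub {q : ℝ} (h0 : 0 < q) (h1 : q < 1) :
    theta3 q ^ 2 - theta4 q ^ 2 = 2 * theta2 (q^2) ^ 2 := by
  have h := ((theta3_sq h0 h1).sub (theta4_sq h0 h1)).tsum_eq
  have h0' : 0 < q^2 := by positivity
  have h1' : q^2 < 1 := by nlinarith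
  have h2 := ((theta2_sq h0' h1').mul_left 2).tsum_eq
  rw [← h, ← h2]
  let e : ℤ × ℤ → ℤ × ℤ := fun p => (p.1 + p.2 + 1, p.1 - p.2)
  have he : Function.Injective e := by
    rintro ⟨a, b⟩ ⟨c, d⟩ h
    simp only [e, Prod.mk.injEq] at h ⊢
    omega
  rw [← he.tsum_eq]
  · apply tsum_congr
    rintro ⟨a, b⟩
    simp only [e]
    rw [rpow_sq' h0]
    have : Odd (a + b + 1 + (a - b)) := ⟨a, by ring⟩
    rw [this.neg_one_zpow]
    push_cast
    rw [show (2 * (((a:ℝ)+1/2)^2 + ((b:ℝ)+1/2)^2)) = ((a:ℝ)+b+1)^2 + ((a:ℝ)-b)^2 by ring]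
    ring
  · rintro ⟨m, n⟩ hmn
    rcases Int.even_or_odd (m + n) with hh | hh
    · exfalso; apply hmn
      simp [hh.neg_one_zpow]
    · obtain ⟨k, hk⟩ := hh
      refine ⟨(k, m - k - 1), ?_⟩
      simp only [e, Prod.mk.injEq]; omega

lemma id_lin_add {q : ℝ} (h0 : 0 < q) (h1 : q < 1) :
    theta3 q + theta4 q = 2 * theta3 (q^4) := by
  have h := ((summ3 h0 h1).hasSum.add (summ4 h0 h1).hasSum).tsum_eq
  have h0' : 0 < q^4 := by positivity
  have h1' : q^4 < 1 := pow_lt_one₀ h0.le h1 (by norm_num)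
  have h2 := ((summ3 h0' h1').hasSum.mul_left 2).tsum_eq
  simp only [theta3, theta4]
  rw [← h, ← h2]
  let e : ℤ → ℤ := fun p => 2 * p
  have he : Function.Injective e := by
    intro a b h
    simp only [e] at h
    omega
  rw [← he.tsum_eq]
  · apply tsum_congr
    intro a
    simp only [e]
    rw [zpow_mul, show q^4 = (q^2)^2 by ring, rpow_sq' (by positivity), rpow_sq' h0]
    push_cast
    norm_num
    rw [show (2 * (2 * (a:ℝ)^2)) = (2*(a:ℝ))^2 by ring]
    ring
  · rintro m hmn
    rcases Int.even_or_odd m with hh | hh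
    · obtain ⟨k, hk⟩ := hh
      refine ⟨k, ?_⟩
      simp only [e]; omega
    · exfalso; apply hmn
      simp [hh.neg_one_zpow]

lemma id_lin_sub {q : ℝ} (h0 : 0 < q) (h1 : q < 1) :
    theta3 q - theta4 q = 2 * theta2 (q^4) := by
  have h := ((summ3 h0 h1).hasSum.sub (summ4 h0 h1).hasSum).tsum_eq
  have h0' : 0 < q^4 := by positivity
  have h1' : q^4 < 1 := pow_lt_one₀ h0.le h1 (by norm_num)
  have h2 := ((summ2 h0' h1').hasSum.mul_left 2).tsum_eq
  simp only [theta3, theta4, theta2]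
  rw [← h, ← h2]
  let e : ℤ → ℤ := fun p => 2 * p + 1
  have he : Function.Injective e := by
    intro a b h
    simp only [e] at h
    omega
  rw [← he.tsum_eq]
  · apply tsum_congr
    intro a
    simp only [e]
    rw [(odd_two_mul_add_one a).neg_one_zpow, show q^4 = (q^2)^2 by ring, rpow_sq' (by positivity), rpow_sq' h0]
    push_cast
    rw [show (2 * (2 * ((a:ℝ)+1/2)^2)) = (2*(a:ℝ)+1)^2 by ring]
    ring
  · rintro m hmn
    rcases Int.even_or_odd m with hh | hh
    · exfalso; apply hmn
      simp [hh.neg_one_zpow]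
    · obtain ⟨k, hk⟩ := hh
      refine ⟨k, ?_⟩
      simp only [e]; omega

lemma id_two {q : ℝ} (h0 : 0 < q) (h1 : q < 1) :
    theta2 q ^ 2 = 2 * theta2 (q^2) * theta3 (q^2) := by
  have h0' : 0 < √q := Real.sqrt_pos.2 h0
  have h1' : √q < 1 := by rw [Real.sqrt_lt' (by norm_num)]; simpa
  have a := id_lin_add h0' h1'
  have b := id_lin_sub h0' h1'
  have c := id_sub h0' h1'
  have e : √q^4 = q^2 := by
    rw [show √q^4 = (√q^2)^2 by ring, Real.sq_sqrt h0.le]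
  rw [e] at a b
  rw [Real.sq_sqrt h0.le] at c
  linear_combination (-1/2) * c + (1/2) * (theta3 √q - theta4 √q) * a + theta3 (q^2) * b

lemma jacobi_id {q : ℝ} (h0 : 0 < q) (h1 : q < 1) :
    theta3 q ^ 4 = theta2 q ^ 4 + theta4 q ^ 4 := by
  have a := id_add h0 h1
  have b := id_sub h0 h1
  have c := id_two h0 h1
  linear_combination (theta3 q ^2 - theta4 q^2) * a + 2 * theta3 (q^2)^2 * b - (theta2 q ^2 + 2 * theta2 (q^2) * theta3 (q^2)) * c

lemma theta3_pos {q : ℝ} (h0 : 0 < q) (h1 : q < 1) : 0 < theta3 q :=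
  (summ3 h0 h1).tsum_pos (fun n => by positivity) 0 (by positivity)

lemma theta2_pos {q : ℝ} (h0 : 0 < q) (h1 : q < 1) : 0 < theta2 q :=
  (summ2 h0 h1).tsum_pos (fun n => by positivity) 0 (by positivity)

lemma theta2_strict {q r : ℝ} (h0 : 0 < q) (hqr : q < r) (h1 : r < 1) : theta2 q < theta2 r := by
  refine Summable.tsum_lt_tsum (i := 0) (fun n => ?_) ?_ (summ2 h0 (hqr.trans h1)) (summ2 (h0.trans hqr) h1)
  · exact Real.rpow_le_rpow h0.le hqr.le (by positivity)
  · exact Real.rpow_lt_rpow h0.le hqr (by norm_num)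

lemma theta_fun_eq : theta2 (Real.exp (-π)) = theta4 (Real.exp (-π)) := by
  have h := Complex.tsum_exp_neg_quadratic (a := 1) (by simp) (-Complex.I / 2)
  have e : ∀ x : ℝ, Real.exp (-π) ^ x = Real.exp (-π * x) := fun x => by
    rw [← Real.exp_mul]
  rw [← Complex.ofReal_inj]
  simp only [theta2, theta4, e]
  push_cast
  rw [Complex.one_cpow] at h
  simp only [div_one, one_mul] at h
  rw [show (∑' (n : ℤ), (-1:ℂ) ^ n * Complex.exp (-↑π * (n:ℂ) ^ 2)) = ∑' n : ℤ, Complex.exp (-↑π * 1 * (n:ℂ) ^ 2 + 2 * ↑π * (-Complex.I / 2) * n) from ?_, h]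
  · apply tsum_congr; intro n; congr 2
    rw [show Complex.I * (-Complex.I / 2) = 1/2 by linear_combination (-1/2 : ℂ) * Complex.I_sq]
  · apply tsum_congr; intro n
    rw [Complex.exp_add, mul_comm]
    congr 1
    · ring_nf
    · rw [show 2 * (π:ℂ) * (-Complex.I / 2) * n = n * (-(π * Complex.I)) by ring, Complex.exp_int_mul, Complex.exp_neg, Complex.exp_pi_mul_I]
      norm_num

lemma summ_poly (k : ℕ) {c : ℕ → ℝ} (hc : ∀ n, |c n| ≤ ((n:ℝ)+1)^k) {r : ℝ} (hr : |r| < 1) :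
    Summable (fun n => ‖c n * r^n‖) := by
  have h := summable_pow_mul_geometric_of_norm_lt_one k (r := |r|) (by simpa using hr)
  rcases eq_or_ne r 0 with rfl | hr0
  · apply summable_of_ne_finset_zero (s := {0})
    intro b hb
    have : b ≠ 0 := by simpa using hb
    simp [this]
  have h2 := ((summable_nat_add_iff 1).2 h).mul_left (|r|⁻¹)
  refine Summable.of_nonneg_of_le (fun n => norm_nonneg _) (fun n => ?_) h2
  rw [norm_mul, norm_pow, Real.norm_eq_abs, Real.norm_eq_abs, pow_succ]
  have : 0 < |r| := abs_pos.2 hr0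
  push_cast
  calc |c n| * |r|^n ≤ ((n:ℝ)+1)^k * |r|^n := by gcongr; exact hc n
    _ = _ := by field_simp

lemma ps_deriv (k : ℕ) {c : ℕ → ℝ} (hc : ∀ n, |c n| ≤ ((n:ℝ)+1)^k) {z : ℝ} (hz : |z| < 1) :
    HasDerivAt (fun z => ∑' n, c n * z^n) (∑' n : ℕ, ((n:ℝ)+1) * c (n+1) * z^n) z := by
  obtain ⟨r, hzr, hr⟩ := exists_between hz
  have hr0 : 0 < r := (abs_nonneg z).trans_lt hzr
  have hra : |r| < 1 := by rwa [abs_of_pos hr0]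
  have key := hasDerivAt_tsum_of_isPreconnected (𝕜 := ℝ) (F := ℝ) (t := Metric.ball (0:ℝ) r)
    (g := fun n z => c n * z^n) (g' := fun (n : ℕ) z => c n * ((n:ℝ) * z^(n-1)))
    (u := fun n : ℕ => |c n| * ((n:ℝ) * r^(n-1))) (y₀ := 0) (y := z) ?_ Metric.isOpen_ball
    (convex_ball _ _).isPreconnected ?_ ?_ ?_ ?_ ?_
  · have hs : Summable (fun n : ℕ => c n * ((n:ℝ) * z^(n-1))) := by
      apply Summable.of_norm
      rw [← summable_nat_add_iff 1]
      have := summ_poly (k+1) (c := fun n => ((n:ℝ)+1) * c (n+1) / 2^k) ?_ hz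
      · refine (this.mul_left (2^k)).congr (fun n => ?_)
        rw [← Real.norm_of_nonneg (show (0:ℝ) ≤ 2^k by positivity), ← norm_mul]
        push_cast
        congr 1; rw [Real.norm_of_nonneg (by positivity)]; field_simp
      · intro n
        rw [abs_div, abs_mul, abs_of_nonneg (show (0:ℝ) ≤ n+1 by positivity),
          abs_of_nonneg (show (0:ℝ) ≤ 2^k by positivity), div_le_iff₀ (by positivity), pow_succ]
        have h1 := hc (n+1)
        push_cast at h1
        have h2 : ((n:ℝ)+1+1)^k ≤ ((n:ℝ)+1)^k * 2^k := by
          rw [← mul_pow]; gcongr; nlinarith [(Nat.cast_nonneg n : (0:ℝ) ≤ n)]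
        calc ((n:ℝ)+1) * |c (n+1)| ≤ ((n:ℝ)+1) * (((n:ℝ)+1)^k * 2^k) := by gcongr; exact h1.trans h2
          _ = _ := by ring
    have e : ∑' n : ℕ, c n * ((n:ℝ) * z^(n-1)) = ∑' n : ℕ, ((n:ℝ)+1) * c (n+1) * z^n := by
      rw [hs.tsum_eq_zero_add]
      simp only [Nat.cast_zero, zero_mul, mul_zero, zero_add, Nat.add_sub_cancel]
      apply tsum_congr; intro n; push_cast; ring
    rw [← e]; exact key
  · rw [← summable_nat_add_iff 1]
    have := summ_poly (k+1) (c := fun n => ((n:ℝ)+1) * c (n+1) / 2^k) ?_ hra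
    · refine (this.mul_left (2^k)).congr (fun n => ?_)
      rw [norm_mul, norm_pow, norm_div, norm_mul]
      simp only [Real.norm_eq_abs, abs_of_pos hr0]
      push_cast
      rw [abs_of_nonneg (show (0:ℝ) ≤ n+1 by positivity), abs_of_nonneg (show (0:ℝ) ≤ 2^k by positivity)]
      field_simp
    · intro n
      rw [abs_div, abs_mul, abs_of_nonneg (show (0:ℝ) ≤ n+1 by positivity),
        abs_of_nonneg (show (0:ℝ) ≤ 2^k by positivity), div_le_iff₀ (by positivity), pow_succ]
      have h1 := hc (n+1)
      push_cast at h1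
      have h2 : ((n:ℝ)+1+1)^k ≤ ((n:ℝ)+1)^k * 2^k := by
        rw [← mul_pow]; gcongr; nlinarith [(Nat.cast_nonneg n : (0:ℝ) ≤ n)]
      calc ((n:ℝ)+1) * |c (n+1)| ≤ ((n:ℝ)+1) * (((n:ℝ)+1)^k * 2^k) := by gcongr; exact h1.trans h2
        _ = _ := by ring
  · intro n y _
    exact (hasDerivAt_pow n y).const_mul (c n)
  · intro n y hy
    have hy' : |y| < r := by simpa using hy
    rw [norm_mul, norm_mul, norm_pow]
    simp only [Real.norm_eq_abs, Nat.abs_cast]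
    gcongr
  · simpa using hr0
  · exact (summ_poly k hc (r := 0) (by simp)).of_norm
  · simpa using hzr

noncomputable def aC (n : ℕ) : ℝ := ((ascPochhammer ℝ n).eval (1/4) / n.factorial)^2

lemma aC_zero : aC 0 = 1 := by simp [aC]

lemma aC_succ (n : ℕ) : ((n:ℝ)+1)^2 * aC (n+1) = ((n:ℝ)+1/4)^2 * aC n := by
  simp only [aC, ascPochhammer_succ_eval, Nat.factorial_succ]
  push_cast
  have : (n.factorial : ℝ) ≠ 0 := by positivity
  field_simp
  ring

lemma aC_nonneg (n : ℕ) : 0 ≤ aC n := sq_nonneg _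

lemma aC_le (n : ℕ) : aC n ≤ 1 := by
  induction n with
  | zero => simp [aC_zero]
  | succ n ih =>
    have h := aC_succ n
    have h0 := aC_nonneg n
    have hn : (0:ℝ) ≤ n := Nat.cast_nonneg n
    by_contra hh
    push Not at hh
    nlinarith [mul_lt_mul_of_pos_left hh (show 0 < ((n:ℝ)+1)^2 by positivity), mul_le_mul_of_nonneg_left ih (show 0 ≤ ((n:ℝ)+1/4)^2 by positivity)]

noncomputable def fH (z : ℝ) : ℝ := ∑' n, aC n * z^n
noncomputable def fH1 (z : ℝ) : ℝ := ∑' n : ℕ, ((n:ℝ)+1) * aC (n+1) * z^n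
noncomputable def fH2 (z : ℝ) : ℝ := ∑' n : ℕ, ((n:ℝ)+1) * (((n+1:ℕ):ℝ)+1) * aC (n+1+1) * z^n

lemma bd0 (n : ℕ) : |aC n| ≤ ((n:ℝ)+1)^0 := by
  rw [abs_of_nonneg (aC_nonneg n)]; simpa using aC_le n

lemma bd1 (n : ℕ) : |((n:ℝ)+1) * aC (n+1)| ≤ ((n:ℝ)+1)^1 := by
  rw [abs_of_nonneg (mul_nonneg (by positivity) (aC_nonneg _)), pow_one]
  exact mul_le_of_le_one_right (by positivity) (aC_le _)

lemma fH_deriv {z : ℝ} (hz : |z| < 1) : HasDerivAt fH (fH1 z) z := ps_deriv 0 bd0 hz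
lemma fH1_deriv {z : ℝ} (hz : |z| < 1) : HasDerivAt fH1 (fH2 z) z := by
  have := ps_deriv 1 bd1 hz
  simp only [← mul_assoc] at this
  exact this

lemma summ_a (k : ℕ) {z : ℝ} (hz : |z| < 1) : Summable (fun n : ℕ => (n:ℝ)^k * aC n * z^n) := by
  refine (summ_poly k (c := fun n => (n:ℝ)^k * aC n) ?_ hz).of_norm
  intro n
  rw [abs_of_nonneg (mul_nonneg (by positivity) (aC_nonneg _))]
  calc (n:ℝ)^k * aC n ≤ (n:ℝ)^k * 1 := by gcongr; exact aC_le n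
    _ ≤ _ := by rw [mul_one]; gcongr; linarith

lemma fH_ode {z : ℝ} (h0 : 0 < z) (h1 : z < 1) :
    z * (1 - z) * fH2 z = fH z / 16 - (1 - 3 / 2 * z) * fH1 z := by
  have hz : |z| < 1 := by rwa [abs_of_pos h0]
  set g := ∑' n : ℕ, (n:ℝ)^1 * aC n * z^n with hg
  set h := ∑' n : ℕ, (n:ℝ)^2 * aC n * z^n with hh
  have e1 : g = z * fH1 z := by
    rw [hg, (summ_a 1 hz).tsum_eq_zero_add, fH1, ← tsum_mul_left]
    simp only [Nat.cast_zero, ne_eq, one_ne_zero, not_false_eq_true, zero_pow, zero_mul, zero_add]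
    apply tsum_congr; intro n; push_cast; ring
  have s1 : Summable (fun n : ℕ => ((n:ℝ)+1) * aC (n+1) * z^n) := (summ_poly 1 bd1 hz).of_norm
  have s2 : Summable (fun n : ℕ => ((n:ℝ)^2+n) * aC (n+1) * z^n) := by
    refine ((((summable_nat_add_iff 1).2 (summ_a 2 hz)).mul_left z⁻¹).sub s1).congr (fun n => ?_)
    push_cast; field_simp; ring
  have e2' : z * fH2 z = ∑' n : ℕ, ((n:ℝ)^2+n) * aC (n+1) * z^n := by
    rw [s2.tsum_eq_zero_add, fH2, ← tsum_mul_left]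
    simp only [Nat.cast_zero, ne_eq, OfNat.ofNat_ne_zero, not_false_eq_true, zero_pow, zero_mul, zero_add]
    apply tsum_congr; intro n; push_cast; ring
  have e2 : h = z * (fH1 z + z * fH2 z) := by
    rw [e2', fH1, ← s1.tsum_add s2, hh, (summ_a 2 hz).tsum_eq_zero_add, ← tsum_mul_left]
    simp only [Nat.cast_zero, ne_eq, OfNat.ofNat_ne_zero, not_false_eq_true, zero_pow, zero_mul, zero_add]
    apply tsum_congr; intro n; push_cast; ring
  have e3 : h = z * (h + g / 2 + fH z / 16) := by
    have sf : Summable (fun n => aC n * z^n) := (summ_poly 0 bd0 hz).of_norm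
    have := (((summ_a 2 hz).hasSum.add ((summ_a 1 hz).hasSum.div_const 2)).add (sf.hasSum.div_const 16)).tsum_eq
    rw [← hh, ← hg] at this
    rw [show fH z = ∑' n, aC n * z^n from rfl, ← this, ← tsum_mul_left]
    conv_lhs => rw [hh, (summ_a 2 hz).tsum_eq_zero_add]
    simp only [Nat.cast_zero, ne_eq, OfNat.ofNat_ne_zero, not_false_eq_true, zero_pow, zero_mul, zero_add]
    apply tsum_congr; intro n; push_cast
    rw [aC_succ]; ring
  have : z * (z * (1 - z) * fH2 z) = z * (fH z / 16 - (1 - 3 / 2 * z) * fH1 z) := by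
    rw [e2, e1] at e3
    linear_combination e3
  exact mul_left_cancel₀ h0.ne' this

lemma fH_pos {z : ℝ} (h0 : 0 ≤ z) (h1 : z < 1) : 0 < fH z := by
  have sf : Summable (fun n => aC n * z^n) := (summ_poly 0 bd0 (by rwa [abs_of_nonneg h0])).of_norm
  exact sf.tsum_pos (fun n => mul_nonneg (aC_nonneg n) (by positivity)) 0 (by simp [aC_zero])

lemma fH_zero : fH 0 = 1 := by
  rw [fH, tsum_eq_single 0]
  · simp [aC_zero]
  · intro n hn; simp [hn]

noncomputable def bC (n : ℕ) : ℝ := ((ascPochhammer ℝ n).eval (1/2))^3 / (n.factorial : ℝ)^3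

lemma bC_succ (n : ℕ) : ((n:ℝ)+1)^3 * bC (n+1) = ((n:ℝ)+1/2)^3 * bC n := by
  simp only [bC, ascPochhammer_succ_eval, Nat.factorial_succ]
  push_cast
  have : (n.factorial : ℝ) ≠ 0 := by positivity
  field_simp
  ring

open PowerSeries in
lemma clausen_coeff (n : ℕ) : ∑ p ∈ Finset.HasAntidiagonal.antidiagonal n, aC p.1 * aC p.2 = bC n := by
  let u : PowerSeries ℝ := PowerSeries.mk aC
  obtain ⟨D, D_def⟩ : ∃ D : PowerSeries ℝ → PowerSeries ℝ, D = fun w => X * PowerSeries.derivative ℝ w := ⟨_, rfl⟩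
  have hD : ∀ w n, coeff n (D w) = n * coeff n w := by
    intro w n
    cases n with
    | zero => simp [D_def]
    | succ n => simp [D_def, coeff_succ_X_mul, PowerSeries.coeff_derivative, mul_comm]
  have hmul : ∀ v w, D (v * w) = v * D w + w * D v := by
    intro v w; simp only [D_def, Derivation.leibniz, smul_eq_mul]; ring
  have hadd : ∀ v w, D (v + w) = D v + D w := by
    intro v w; simp only [D_def, map_add]; ring
  have hX : D X = X := by simp [D_def, PowerSeries.derivative_X]
  have hC : ∀ r, D (C r) = 0 := by intro r; simp [D_def, PowerSeries.derivative_C]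
  have h1 : D (D u) = X * (D (D u) + C (1/2) * D u + C (1/16) * u) := by
    ext n
    cases n with
    | zero => simp [hD]
    | succ n =>
      rw [coeff_succ_X_mul]
      simp only [hD, map_add, coeff_C_mul, u, coeff_mk]
      push_cast
      linear_combination aC_succ n
  have h2 := congrArg D h1
  rw [hmul, hadd, hadd, hmul, hmul, hX, hC, hC] at h2
  have c8 : (C (1/2) : PowerSeries ℝ) = 8 * C (1/16) := by
    rw [show (8 : PowerSeries ℝ) = C 8 from (map_ofNat C 8).symm, ← map_mul]; norm_num
  have c16 : (16 : PowerSeries ℝ) * C (1/16) = 1 := by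
    rw [show (16 : PowerSeries ℝ) = C 16 from (map_ofNat C 16).symm, ← map_mul]; norm_num
  have h3 : D (D (D (u*u))) = X * (D (D (D (u*u))) + 24 * C (1/16) * D (D (u*u)) + 12 * C (1/16) * D (u*u) + 2 * C (1/16) * (u*u)) := by
    simp only [hmul, hadd]
    rw [c8] at h1 h2
    linear_combination 6 * D u * h1 + 2 * u * h2 - 2 * X * u * D (D u) * c16
  have h4 : ∀ n, coeff n (u*u) = bC n := by
    intro n
    induction n with
    | zero => simp [coeff_mul, u, bC, aC]
    | succ n ih =>
      have := congrArg (coeff (n+1)) h3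
      rw [coeff_succ_X_mul] at this
      rw [show (24 * C (1/16) : PowerSeries ℝ) = C (3/2) by
            rw [show (24 : PowerSeries ℝ) = C 24 from (map_ofNat C 24).symm, ← map_mul]; norm_num,
          show (12 * C (1/16) : PowerSeries ℝ) = C (3/4) by
            rw [show (12 : PowerSeries ℝ) = C 12 from (map_ofNat C 12).symm, ← map_mul]; norm_num,
          show (2 * C (1/16) : PowerSeries ℝ) = C (1/8) by
            rw [show (2 : PowerSeries ℝ) = C 2 from (map_ofNat C 2).symm, ← map_mul]; norm_num] at this
      simp only [hD, map_add, coeff_C_mul, ih] at this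
      have hb := bC_succ n
      push_cast at this
      have hp : ((n:ℝ)+1)^3 ≠ 0 := by positivity
      apply mul_left_cancel₀ hp
      rw [hb]; linear_combination this
  rw [← h4, coeff_mul]; simp [u]

lemma clausen {z : ℝ} (hz : |z| < 1) : ∑' n : ℕ, ((ascPochhammer ℝ n).eval (1 / 2)) ^ 3 / ((n.factorial : ℝ)) ^ 3 * z ^ n = fH z ^ 2 := by
  have s := summ_poly 0 bd0 hz
  rw [sq, fH, tsum_mul_tsum_eq_tsum_sum_antidiagonal_of_summable_norm s s]
  apply tsum_congr; intro n
  have := clausen_coeff n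
  rw [bC] at this
  rw [← this, Finset.sum_mul]
  apply Finset.sum_congr rfl
  intro p hp
  rw [← Finset.HasAntidiagonal.mem_antidiagonal.1 hp, pow_add]; ring

noncomputable def ph (s : ℝ) : ℝ := 16 * s * (1 - s)^2 / (1 + s)^4
noncomputable def ps (s : ℝ) : ℝ := 4 * s^2 * (1 - s^2)

lemma ph_deriv {s : ℝ} (hs : 0 ≤ s) :
    HasDerivAt ph (16 * (1-s) * (1-6*s+s^2) / (1+s)^5) s := by
  have h1 : HasDerivAt (fun s : ℝ => s) 1 s := hasDerivAt_id s
  have hp := ((h1.const_mul 16).mul ((h1.const_sub 1).pow 2)).div ((h1.const_add 1).pow 4) (by simp; positivity)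
  refine hp.congr_deriv ?_
  simp
  field_simp
  ring

lemma ps_deriv' (s : ℝ) : HasDerivAt ps (8 * s * (1 - 2 * s^2)) s := by
  have h1 : HasDerivAt (fun s : ℝ => s) 1 s := hasDerivAt_id s
  have hp := ((h1.pow 2).const_mul 4).mul ((h1.pow 2).const_sub 1)
  refine hp.congr_deriv ?_
  simp
  ring

lemma rangeS {s t : ℝ} (hs : 0 ≤ s) (hst : s ≤ t) (ht : t < 1) (hS : 0 < 1 - 6 * t + t^2) :
    0 < 1 - 6 * s + s^2 ∧ s < 1/5 := by
  constructor
  · nlinarith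
  · by_contra h
    push Not at h
    nlinarith

lemma ph_range {s : ℝ} (hs : 0 ≤ s) (_h1 : s < 1/5) (hS : 0 < 1 - 6 * s + s^2) :
    0 ≤ ph s ∧ ph s < 1 := by
  constructor
  · unfold ph; positivity
  · have : 1 - ph s = ((1 - 6*s+s^2)/(1+s)^2)^2 := by unfold ph; field_simp; ring
    have h2 : 0 < ((1 - 6*s+s^2)/(1+s)^2)^2 := by positivity
    linarith

lemma ph_pos {s : ℝ} (hs : 0 < s) (h1 : s < 1/5) : 0 < ph s := by
  unfold ph
  have : 0 < 1 - s := by linarith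
  positivity

lemma ps_range {s : ℝ} (hs : 0 ≤ s) (h1 : s < 1/5) : 0 ≤ ps s ∧ ps s < 1 := by
  have h2 : s^2 < 1/25 := by nlinarith
  unfold ps
  constructor
  · have : 0 ≤ 1 - s^2 := by linarith
    positivity
  · nlinarith [sq_nonneg s]

lemma ps_pos {s : ℝ} (hs : 0 < s) (h1 : s < 1/5) : 0 < ps s := by
  have h2 : s^2 < 1/25 := by nlinarith
  unfold ps
  have : 0 < 1 - s^2 := by linarith
  positivity

noncomputable def V1 (s : ℝ) : ℝ := 16 * s * (1-s)^2 * (1-6*s+s^2) / (1+s)^6 * fH1 (ph s)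
noncomputable def V2 (s : ℝ) : ℝ :=
  s * (1-s) / (1+s) * fH (ps s) + 8 * s^2 * (1-s) * (1-2*s^2) * fH1 (ps s)

lemma y1_deriv {s : ℝ} (hs : 0 ≤ s) (h1 : s < 1/5) (hS : 0 < 1 - 6 * s + s^2) :
    HasDerivAt (fun s => fH (ph s)) (fH1 (ph s) * (16 * (1-s) * (1-6*s+s^2) / (1+s)^5)) s := by
  have hr := ph_range hs h1 hS
  exact (fH_deriv (by rw [abs_of_nonneg hr.1]; exact hr.2)).comp s (ph_deriv hs)

lemma y2_deriv {s : ℝ} (hs : 0 ≤ s) (h1 : s < 1/5) :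
    HasDerivAt (fun s => (1 + s) * fH (ps s)) (fH (ps s) + (1+s) * (fH1 (ps s) * (8 * s * (1 - 2 * s^2)))) s := by
  have hr := ps_range hs h1
  have h := (fH_deriv (z := ps s) (by rw [abs_of_nonneg hr.1]; exact hr.2)).comp s (ps_deriv' s)
  have := ((hasDerivAt_id s).const_add 1).mul h
  refine this.congr_deriv ?_
  simp

lemma V1_cont {s : ℝ} (hs : 0 ≤ s) (h1 : s < 1/5) (hS : 0 < 1 - 6 * s + s^2) :
    HasDerivAt V1 (16 * (1-s)/(1+s)^3 * (1 - 3/2 * ph s) * fH1 (ph s) +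
      16 * s * (1-s)^2 * (1-6*s+s^2) / (1+s)^6 * (fH2 (ph s) * (16 * (1-s) * (1-6*s+s^2) / (1+s)^5))) s := by
  have hr := ph_range hs h1 hS
  have hd := (fH1_deriv (by rw [abs_of_nonneg hr.1]; exact hr.2)).comp s (ph_deriv hs)
  have h1 : HasDerivAt (fun s : ℝ => s) 1 s := hasDerivAt_id s
  have hp := (((h1.const_mul 16).mul ((h1.const_sub 1).pow 2)).mul (((h1.const_mul 6).const_sub 1).add (h1.pow 2))).div ((h1.const_add 1).pow 6) (by simp; positivity)
  have := hp.mul hd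
  refine this.congr_deriv ?_
  simp
  left
  unfold ph
  field_simp
  ring

lemma V1_deriv {s : ℝ} (hs : 0 < s) (h1 : s < 1/5) (hS : 0 < 1 - 6 * s + s^2) :
    HasDerivAt V1 ((1-s)/(1+s)^3 * fH (ph s)) s := by
  refine (V1_cont hs.le h1 hS).congr_deriv ?_
  have ho := fH_ode (ph_pos hs h1) (ph_range hs.le h1 hS).2
  have e : 16 * s * (1-s)^2 * (1-6*s+s^2) / (1+s)^6 * (16 * (1-s) * (1-6*s+s^2) / (1+s)^5)
    = 16 * (1-s)/(1+s)^3 * (ph s * (1 - ph s)) := by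
    unfold ph; field_simp; ring
  linear_combination fH2 (ph s) * e + 16 * (1-s)/(1+s)^3 * ho

lemma V2_cont {s : ℝ} (hs : 0 ≤ s) (h1 : s < 1/5) :
    HasDerivAt V2 ((1-2*s-s^2)/(1+s)^2 * fH (ps s) + s * (1-s)/(1+s) * (fH1 (ps s) * (8 * s * (1 - 2 * s^2)))
      + (16*s - 24*s^2 - 64*s^3 + 80*s^4) * fH1 (ps s) +
      8 * s^2 * (1-s) * (1-2*s^2) * (fH2 (ps s) * (8 * s * (1 - 2 * s^2)))) s := by
  have hr := ps_range hs h1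
  have hz : |ps s| < 1 := by rw [abs_of_nonneg hr.1]; exact hr.2
  have hd1 := (fH1_deriv hz).comp s (ps_deriv' s)
  have hd := (fH_deriv hz).comp s (ps_deriv' s)
  have h1 : HasDerivAt (fun s : ℝ => s) 1 s := hasDerivAt_id s
  have hp := (h1.mul (h1.const_sub 1)).div (h1.const_add 1) (by positivity)
  have hq := (((h1.pow 2).const_mul 8).mul (h1.const_sub 1)).mul (((h1.pow 2).const_mul 2).const_sub 1)
  have := (hp.mul hd).add (hq.mul hd1)
  refine this.congr_deriv ?_
  simp
  field_simp
  ring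

lemma V2_deriv {s : ℝ} (hs : 0 < s) (h1 : s < 1/5) :
    HasDerivAt V2 ((1-s)/(1+s)^3 * ((1 + s) * fH (ps s))) s := by
  refine (V2_cont hs.le h1).congr_deriv ?_
  have ho := fH_ode (ps_pos hs h1) (ps_range hs.le h1).2
  have e : 8 * s^2 * (1-s) * (1-2*s^2) * (8 * s * (1 - 2 * s^2)) = 16 * s / (1+s) * (ps s * (1 - ps s)) := by
    unfold ps; field_simp; ring
  have e2 : s * (1-s)/(1+s) * (8 * s * (1 - 2 * s^2)) + (16*s - 24*s^2 - 64*s^3 + 80*s^4) = 16 * s / (1+s) * (1 - 3/2 * ps s) := by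
    unfold ps; field_simp; ring
  have e3 : (1-2*s-s^2)/(1+s)^2 + s/(1+s) = (1-s)/(1+s)^3 * (1+s) := by
    field_simp; ring
  linear_combination fH2 (ps s) * e + fH1 (ps s) * e2 + fH (ps s) * e3 + 16 * s / (1+s) * ho

lemma const_of_deriv_zero {g : ℝ → ℝ} {t : ℝ} (ht : 0 < t) (hc : ∀ s, 0 ≤ s → s ≤ t → ContinuousAt g s)
    (hd : ∀ s, 0 < s → s < t → HasDerivAt g 0 s) : g t = g 0 := by
  obtain ⟨c, hc1, hc2⟩ := exists_hasDerivAt_eq_slope g (fun _ => 0) ht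
    (fun s hs => (hc s hs.1 hs.2).continuousWithinAt) (fun s hs => hd s hs.1 hs.2)
  rw [eq_div_iff (by linarith)] at hc2
  linarith

lemma funeq {t : ℝ} (h0 : 0 < t) (h1 : t < 1) (hS : 0 < 1 - 6 * t + t^2) :
    fH (ph t) = (1 + t) * fH (ps t) := by
  have hW : ∀ s, 0 < s → s ≤ t → V1 s * ((1+s) * fH (ps s)) - fH (ph s) * V2 s = 0 := by
    intro s hs0 hst
    have := const_of_deriv_zero (g := fun s => V1 s * ((1+s) * fH (ps s)) - fH (ph s) * V2 s) hs0 ?_ ?_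
    · beta_reduce at this
      rw [this]; simp [V1, V2]
    · intro x hx hxs
      obtain ⟨a, b⟩ := rangeS hx (hxs.trans hst) h1 hS
      exact ((V1_cont hx b a).continuousAt.mul (y2_deriv hx b).continuousAt).sub
        ((y1_deriv hx b a).continuousAt.mul (V2_cont hx b).continuousAt)
    · intro x hx hxs
      obtain ⟨a, b⟩ := rangeS hx.le (hxs.le.trans hst) h1 hS
      refine (((V1_deriv hx b a).mul (y2_deriv hx.le b)).sub
        ((y1_deriv hx.le b a).mul (V2_deriv hx b))).congr_deriv ?_
      unfold V1 V2
      field_simp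
      ring
  have hq := const_of_deriv_zero (g := fun s => fH (ph s) / ((1+s) * fH (ps s))) h0 ?_ ?_
  · beta_reduce at hq
    obtain ⟨a, b⟩ := rangeS h0.le le_rfl h1 hS
    have hp := fH_pos (ps_range h0.le b).1 (ps_range h0.le b).2
    rw [div_eq_iff (by positivity)] at hq
    rw [hq]; simp [ph, ps, fH_zero]
  · intro x hx hxs
    obtain ⟨a, b⟩ := rangeS hx hxs h1 hS
    have hp := fH_pos (ps_range hx b).1 (ps_range hx b).2
    exact (y1_deriv hx b a).continuousAt.div (y2_deriv hx b).continuousAt (by positivity)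
  · intro x hx hxs
    obtain ⟨a, b⟩ := rangeS hx.le hxs.le h1 hS
    have hp := fH_pos (ps_range hx.le b).1 (ps_range hx.le b).2
    have hw := hW x hx hxs.le
    refine ((y1_deriv hx.le b a).div (y2_deriv hx.le b) (by positivity)).congr_deriv ?_
    rw [div_eq_zero_iff]; left
    have h1x : 0 < 1 - x := by linarith
    have hP : x * (1-x) / (1+x) ≠ 0 := by positivity
    apply mul_left_cancel₀ hP
    rw [mul_zero, ← hw]
    unfold V1 V2
    field_simp

lemma theta3_nat {q : ℝ} (h0 : 0 < q) (h1 : q < 1) :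
    theta3 q = 1 + 2 * ∑' n : ℕ, q^((n+1)^2) := by
  have h := (summ3 h0 h1).hasSum
  have := h.nat_add_neg
  have e : ∀ n : ℕ, q ^ (((n:ℤ):ℝ)^2) + q ^ (((-(n:ℤ) : ℤ):ℝ)^2) = 2 * q^(n^2) := by
    intro n
    push_cast
    rw [neg_sq, ← two_mul]
    congr 1
    rw [← Real.rpow_natCast q (n^2), Nat.cast_pow]
  simp only [e] at this
  have h2 := this.summable.tsum_eq_zero_add
  rw [this.tsum_eq, tsum_mul_left] at h2
  simp at h2
  unfold theta3
  linarith

lemma theta4_nat {q : ℝ} (h0 : 0 < q) (h1 : q < 1) :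
    theta4 q = 1 + 2 * ∑' n : ℕ, (-1)^(n+1) * q^((n+1)^2) := by
  have h := (summ4 h0 h1).hasSum
  have := h.nat_add_neg
  have e : ∀ n : ℕ, (-1:ℝ)^(n:ℤ) * q ^ (((n:ℤ):ℝ)^2) + (-1:ℝ)^(-(n:ℤ)) * q ^ (((-(n:ℤ) : ℤ):ℝ)^2) = 2 * ((-1)^n * q^(n^2)) := by
    intro n
    push_cast
    rw [neg_sq, zpow_neg, ← inv_zpow, show (-1:ℝ)⁻¹ = -1 by norm_num, ← two_mul, zpow_natCast]
    congr 2
    rw [← Real.rpow_natCast q (n^2), Nat.cast_pow]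
  simp only [e] at this
  have h2 := this.summable.tsum_eq_zero_add
  rw [this.tsum_eq, tsum_mul_left] at h2
  simp at h2
  unfold theta4
  linarith

lemma summ_sq {q : ℝ} (h0 : 0 < q) (h1 : q < 1) (e : ℕ → ℕ) (he : ∀ n, n ≤ e n) :
    Summable (fun n : ℕ => q^(e n)) := by
  refine Summable.of_nonneg_of_le (fun n => by positivity) (fun n => ?_) (summable_geometric_of_lt_one h0.le h1)
  exact pow_le_pow_of_le_one h0.le h1.le (he n)

lemma tail_bound {q : ℝ} (h0 : 0 < q) (h1 : q < 1) : ∑' n : ℕ, q^((n+1)^2) ≤ q / (1 - q) := by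
  have : ∑' n : ℕ, q * q^n = q / (1-q) := by
    rw [tsum_mul_left, tsum_geometric_of_lt_one h0.le h1]; rfl
  rw [← this]
  refine Summable.tsum_le_tsum (fun n => ?_) (summ_sq h0 h1 _ (fun n => by nlinarith)) ((summable_geometric_of_lt_one h0.le h1).mul_left q)
  rw [← pow_succ']
  exact pow_le_pow_of_le_one h0.le h1.le (by nlinarith)

lemma theta3_near {q : ℝ} (h0 : 0 < q) (h1 : q < 1) : |theta3 q - 1| ≤ 2 * (q / (1-q)) := by
  rw [theta3_nat h0 h1, add_sub_cancel_left, abs_of_nonneg (by positivity)]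
  linarith [tail_bound h0 h1]

lemma theta4_near {q : ℝ} (h0 : 0 < q) (h1 : q < 1) : |theta4 q - 1| ≤ 2 * (q / (1-q)) := by
  rw [theta4_nat h0 h1, add_sub_cancel_left, abs_mul, abs_two]
  have hs : Summable (fun n : ℕ => ‖(-1:ℝ)^(n+1) * q^((n+1)^2)‖) := by
    refine (summ_sq h0 h1 (fun n => (n+1)^2) (fun n => by nlinarith)).congr (fun n => ?_)
    simp [abs_of_pos h0]
  have := norm_tsum_le_tsum_norm hs
  have e : ∑' n : ℕ, ‖(-1:ℝ)^(n+1) * q^((n+1)^2)‖ = ∑' n : ℕ, q^((n+1)^2) := by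
    apply tsum_congr; intro n; simp [abs_of_pos h0]
  rw [e, Real.norm_eq_abs] at this
  linarith [tail_bound h0 h1]

lemma pow_diff {q r : ℝ} (h0 : 0 < q) (hqr : q < r) (hr : r ≤ 1/16) (m : ℕ) :
    r^(m+1) - q^(m+1) ≤ (r - q) * (1/4)^m := by
  induction m with
  | zero => simp
  | succ m ih =>
    have hq : q^(m+1) ≤ (1/16) * (1/4)^m := by
      rw [pow_succ']
      have : q^m ≤ (1/4)^m := pow_le_pow_left₀ h0.le (by linarith) m
      have h4 : (0:ℝ) < (1/4)^m := by positivity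
      nlinarith [pow_pos h0 m]
    have h4 : (0:ℝ) < (1/4)^m := by positivity
    have hd : 0 ≤ r^(m+1) - q^(m+1) := sub_nonneg.2 (pow_le_pow_left₀ h0.le hqr.le _)
    calc r^(m+1+1) - q^(m+1+1) = r * (r^(m+1) - q^(m+1)) + (r - q) * q^(m+1) := by ring
      _ ≤ (1/16) * ((r - q) * (1/4)^m) + (r-q) * ((1/16) * (1/4)^m) := by
        have : 0 < r - q := by linarith
        gcongr
      _ ≤ (r - q) * (1/4)^(m+1) := by
        rw [pow_succ]
        nlinarith [mul_pos (sub_pos.2 hqr) h4]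

lemma theta4_anti {q r : ℝ} (h0 : 0 < q) (hqr : q < r) (hr : r ≤ 1/16) : theta4 r ≤ theta4 q := by
  have hr0 := h0.trans hqr
  have S : ∀ x : ℝ, 0 < x → x < 1 → Summable (fun n : ℕ => (-1:ℝ)^(n+1) * x^((n+1)^2)) := by
    intro x hx hx1
    apply Summable.of_norm
    refine (summ_sq hx hx1 (fun n => (n+1)^2) (fun n => by nlinarith)).congr (fun n => ?_)
    simp [abs_of_pos hx]
  have hq1 : q < 1 := by linarith
  have hr1 : r < 1 := by linarith
  rw [theta4_nat h0 hq1, theta4_nat hr0 hr1]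
  have sd := (S r hr0 hr1).sub (S q h0 hq1)
  have e := (S r hr0 hr1).tsum_sub (S q h0 hq1)
  rw [sd.tsum_eq_zero_add] at e
  have hb : ∑' n : ℕ, ((-1:ℝ)^(n+1+1) * r^((n+1+1)^2) - (-1:ℝ)^(n+1+1) * q^((n+1+1)^2)) ≤ ∑' n : ℕ, (r - q) * ((1/4) * (1/4)^n) := by
    refine Summable.tsum_le_tsum (fun n => ?_) ((summable_nat_add_iff 1).2 sd) (((summable_geometric_of_lt_one (by norm_num) (by norm_num)).mul_left _).mul_left _)
    rw [← mul_sub]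
    have hd : 0 ≤ r^((n+1+1)^2) - q^((n+1+1)^2) := sub_nonneg.2 (pow_le_pow_left₀ h0.le hqr.le _)
    calc _ ≤ |(-1:ℝ)^(n+1+1) * (r^((n+1+1)^2) - q^((n+1+1)^2))| := le_abs_self _
      _ = r^((n+1+1)^2) - q^((n+1+1)^2) := by rw [abs_mul, abs_of_nonneg hd]; simp
      _ ≤ (r - q) * (1/4)^(n^2+4*n+3) := by
        have := pow_diff h0 hqr hr (n^2+4*n+3)
        rwa [show n^2+4*n+3+1 = (n+1+1)^2 by ring] at this
      _ ≤ _ := by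
        have : 0 < r - q := by linarith
        rw [← pow_succ']
        gcongr ?_ * ?_
        exact pow_le_pow_of_le_one (by norm_num) (by norm_num) (by nlinarith)
  rw [tsum_mul_left, tsum_mul_left, tsum_geometric_of_lt_one (by norm_num) (by norm_num)] at hb
  norm_num at e hb
  linarith

lemma exp_pi_small : Real.exp (-π) ≤ 1/16 := by
  rw [Real.exp_neg, inv_le_comm₀ (Real.exp_pos _) (by norm_num)]
  have h1 : Real.exp 3 ≤ Real.exp π := Real.exp_le_exp.2 Real.pi_gt_three.le
  have h2 : Real.exp 3 = Real.exp 1 ^ 3 := by rw [← Real.exp_nat_mul]; norm_num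
  have h3 := Real.exp_one_gt_d9
  have h4 : (2.7:ℝ)^3 ≤ Real.exp 1 ^ 3 := by gcongr; linarith
  norm_num at h4 ⊢
  linarith

lemma lam_props {q : ℝ} (h0 : 0 < q) (h1 : q < Real.exp (-π)) :
    0 < modLambda q ∧ modLambda q < 1/2 := by
  have hp := exp_pi_small
  have hq1 : q < 1 := by linarith
  have h2 := theta2_pos h0 hq1
  have h3 := theta3_pos h0 hq1
  have h24 : theta2 q < theta4 q := by
    calc theta2 q < theta2 (Real.exp (-π)) := theta2_strict h0 h1 (by linarith)
      _ = theta4 (Real.exp (-π)) := theta_fun_eq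
      _ ≤ theta4 q := theta4_anti h0 h1 hp
  have hj := jacobi_id h0 hq1
  have h4 : theta2 q ^ 4 < theta4 q ^ 4 := by gcongr
  unfold modLambda
  refine ⟨by positivity, ?_⟩
  rw [div_lt_iff₀ (by positivity)]
  linarith

lemma sq_lt_exp {q : ℝ} (h0 : 0 < q) (h1 : q < Real.exp (-π)) : q^2 < Real.exp (-π) := by
  have hp := exp_pi_small
  nlinarith

lemma z4_range {q : ℝ} (h0 : 0 < q) (h1 : q < Real.exp (-π)) : 0 < z4 q ∧ z4 q < 1 := by
  obtain ⟨a, b⟩ := lam_props h0 h1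
  unfold z4
  constructor
  · have : 0 < 1 - modLambda q := by linarith
    positivity
  · nlinarith [mul_pos (sub_pos.2 b) (sub_pos.2 b)]

lemma step {q : ℝ} (h0 : 0 < q) (h1 : q < Real.exp (-π)) :
    fH (z4 q) / theta3 q ^ 2 = fH (z4 (q^2)) / theta3 (q^2) ^ 2 := by
  have hp := exp_pi_small
  have hq1 : q < 1 := by linarith
  have h0' : 0 < q^2 := by positivity
  have h1' := sq_lt_exp h0 h1
  have hq1' : q^2 < 1 := by linarith
  have p3 := theta3_pos h0 hq1
  have p2' := theta2_pos h0' hq1'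
  have p3' := theta3_pos h0' hq1'
  obtain ⟨t, ht⟩ : ∃ t, t = theta2 (q^2)^2 / theta3 (q^2)^2 := ⟨_, rfl⟩
  have ht0 : 0 < t := by rw [ht]; positivity
  have e2 : theta2 (q^2)^2 = t * theta3 (q^2)^2 := by rw [ht]; field_simp
  have e3 : theta3 q ^ 2 = (1 + t) * theta3 (q^2)^2 := by
    have a := id_add h0 hq1
    have b := id_sub h0 hq1
    linear_combination (1/2) * a + (1/2) * b + e2
  have l1 : modLambda (q^2) = t^2 := by
    unfold modLambda; rw [ht]; ring
  have l2 : modLambda q = 4 * t / (1+t)^2 := by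
    unfold modLambda
    rw [show theta2 q ^ 4 = (theta2 q ^2)^2 by ring, show theta3 q ^ 4 = (theta3 q ^2)^2 by ring,
      e3, id_two h0 hq1, show (2 * theta2 (q^2) * theta3 (q^2))^2 = 4 * theta2 (q^2)^2 * theta3 (q^2)^2 by ring, e2]
    field_simp
  obtain ⟨_, b1⟩ := lam_props h0' h1'
  obtain ⟨_, b2⟩ := lam_props h0 h1
  rw [l1] at b1
  rw [l2, div_lt_iff₀ (by positivity)] at b2
  have z1 : z4 q = ph t := by
    unfold z4 ph; rw [l2]; field_simp; ring
  have z2 : z4 (q^2) = ps t := by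
    unfold z4 ps; rw [l1]
  rw [z1, z2, funeq ht0 (by nlinarith) (by nlinarith), e3]
  field_simp

lemma iter {q : ℝ} (h0 : 0 < q) (h1 : q < Real.exp (-π)) (n : ℕ) :
    q^(2^n) < Real.exp (-π) ∧ fH (z4 q) / theta3 q ^ 2 = fH (z4 (q^(2^n))) / theta3 (q^(2^n)) ^ 2 := by
  induction n with
  | zero => simpa using h1
  | succ n ih =>
    have hp : 0 < q^(2^n) := by positivity
    rw [pow_succ, pow_mul]
    exact ⟨sq_lt_exp hp ih.1, ih.2.trans (step hp ih.1)⟩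

open Filter Topology in
lemma main_eq {q : ℝ} (h0 : 0 < q) (h1 : q < Real.exp (-π)) : fH (z4 q) = theta3 q ^ 2 := by
  have hp := exp_pi_small
  have hq1 : q < 1 := by linarith
  have hx : Tendsto (fun n : ℕ => q^(2^n)) atTop (𝓝 0) :=
    (tendsto_pow_atTop_nhds_zero_of_lt_one h0.le hq1).comp (tendsto_pow_atTop_atTop_of_one_lt (by norm_num))
  have hb : Tendsto (fun n : ℕ => 2 * (q^(2^n) / (1 - q^(2^n)))) atTop (𝓝 0) := by
    have := (hx.div (hx.const_sub 1) (by norm_num)).const_mul 2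
    simpa using this
  have hpos : ∀ n : ℕ, 0 < q^(2^n) := fun n => by positivity
  have hlt : ∀ n : ℕ, q^(2^n) < 1 := fun n => by linarith [(iter h0 h1 n).1]
  have t3 : Tendsto (fun n : ℕ => theta3 (q^(2^n))) atTop (𝓝 1) := by
    rw [tendsto_iff_norm_sub_tendsto_zero]
    exact squeeze_zero (fun n => norm_nonneg _) (fun n => theta3_near (hpos n) (hlt n)) hb
  have t4 : Tendsto (fun n : ℕ => theta4 (q^(2^n))) atTop (𝓝 1) := by
    rw [tendsto_iff_norm_sub_tendsto_zero]
    exact squeeze_zero (fun n => norm_nonneg _) (fun n => theta4_near (hpos n) (hlt n)) hb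
  have tl : Tendsto (fun n : ℕ => modLambda (q^(2^n))) atTop (𝓝 0) := by
    have := ((t3.pow 4).sub (t4.pow 4)).div (t3.pow 4) (by norm_num)
    simp only [one_pow, sub_self, zero_div] at this
    refine this.congr (fun n => ?_)
    simp only [Pi.div_apply, modLambda]
    rw [jacobi_id (hpos n) (hlt n), add_sub_cancel_right]
  have tz : Tendsto (fun n : ℕ => z4 (q^(2^n))) atTop (𝓝 0) := by
    have := (tl.const_mul 4).mul (tl.const_sub 1)
    simpa [z4] using this
  have tf : Tendsto (fun n : ℕ => fH (z4 (q^(2^n)))) atTop (𝓝 1) := by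
    have hc := (fH_deriv (z := 0) (by simp)).continuousAt.tendsto
    rw [fH_zero] at hc
    exact hc.comp tz
  have tq := tf.div (t3.pow 2) (by norm_num)
  have hc : Tendsto (fun _ : ℕ => fH (z4 q) / theta3 q ^ 2) atTop (𝓝 (1 / 1^2)) :=
    tq.congr (fun n => ((iter h0 h1 n).2).symm)
  have := tendsto_nhds_unique hc tendsto_const_nhds
  have p3 := theta3_pos h0 hq1
  field_simp at this
  linarith

theorem stmt_14 :
    ∀ q ∈ Set.Ioo (0 : ℝ) (Real.exp (-π)),
      (0 < z4 q ∧ z4 q < 1) ∧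
      ∑' n : ℕ, ((ascPochhammer ℝ n).eval (1 / 2)) ^ 3 / ((n.factorial : ℝ)) ^ 3 * z4 q ^ n =
        theta3 q ^ 4 := by
  intro q hq
  have hz := z4_range hq.1 hq.2
  refine ⟨hz, ?_⟩
  rw [clausen (by rw [abs_of_pos hz.1]; exact hz.2), main_eq hq.1 hq.2]
  ring
end

section
/- ∑_{(n,m)∈ℤ², (n,m)≠(0,0)} 1/(n² + m²)² = (2π²/3)·G, where G is Catalan's constant. -/
open Real

/-- Catalan's constant `G = ∑_{n=0}^∞ (−1)ⁿ/(2n+1)²`. -/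
noncomputable def catalanConst : ℝ := ∑' n : ℕ, (-1 : ℝ) ^ n / (2 * (n : ℝ) + 1) ^ 2

def SS (n : ℕ) : Set GaussianInt := {z | z.norm = n}

lemma norm_eq' (z : GaussianInt) : z.norm = z.re ^ 2 + z.im ^ 2 := by
  rw [Zsqrtd.norm_def]; ring

lemma SS_finite (n : ℕ) : (SS n).Finite := by
  have h : ((Set.Icc (-(n:ℤ)) n) ×ˢ (Set.Icc (-(n:ℤ)) n)).Finite :=
    (Set.finite_Icc _ _).prod (Set.finite_Icc _ _)
  refine (h.image (fun q : ℤ × ℤ => (⟨q.1, q.2⟩ : GaussianInt))).subset ?_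
  intro z hz
  have hz' : z.re ^ 2 + z.im ^ 2 = n := by rw [← norm_eq']; exact hz
  refine ⟨(z.re, z.im), ?_, rfl⟩
  simp only [Set.mem_prod, Set.mem_Icc]
  refine ⟨⟨?_, ?_⟩, ?_, ?_⟩ <;> nlinarith [sq_nonneg z.re, sq_nonneg z.im]

noncomputable def rr (n : ℕ) : ℕ := (SS n).ncard

lemma rr_one : rr 1 = 4 := by
  have : SS 1 = (({⟨1,0⟩, ⟨-1,0⟩, ⟨0,1⟩, ⟨0,-1⟩} : Finset GaussianInt) : Set GaussianInt) := by
    ext z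
    obtain ⟨a, b⟩ := z
    simp only [SS, Set.mem_ofPred_eq, norm_eq', Finset.coe_insert, Finset.coe_singleton,
      Set.mem_insert_iff, Set.mem_singleton_iff, Zsqrtd.ext_iff]
    constructor
    · intro h
      have ha : -1 ≤ a := by push_cast at h; nlinarith
      have ha' : a ≤ 1 := by push_cast at h; nlinarith
      have hb : -1 ≤ b := by push_cast at h; nlinarith
      have hb' : b ≤ 1 := by push_cast at h; nlinarith
      interval_cases a <;> interval_cases b <;> simp_all
    · rintro (h | h | h | h) <;> simp [h.1, h.2]
  rw [rr, this, Set.ncard_coe_finset]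
  decide

lemma ncard_mul_image (w : GaussianInt) (hw : w ≠ 0) (s : Set GaussianInt) :
    ((fun z => w * z) '' s).ncard = s.ncard :=
  Set.ncard_image_of_injective _ (mul_right_injective₀ hw)

lemma mem_mul_image (w : GaussianInt) (q m : ℕ) (hq : q ≠ 0) (hw : w.norm = q) (z : GaussianInt) :
    z ∈ (fun z => w * z) '' SS m ↔ w ∣ z ∧ z ∈ SS (q * m) := by
  constructor
  · rintro ⟨u, hu, rfl⟩
    refine ⟨dvd_mul_right _ _, ?_⟩
    simp only [SS, Set.mem_ofPred_eq] at hu ⊢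
    rw [Zsqrtd.norm_mul, hw, hu]; push_cast; rfl
  · rintro ⟨⟨u, rfl⟩, hu⟩
    refine ⟨u, ?_, rfl⟩
    simp only [SS, Set.mem_ofPred_eq, Zsqrtd.norm_mul, hw] at hu ⊢
    push_cast at hu
    exact mul_left_cancel₀ (by exact_mod_cast hq) hu

lemma rr_two (m : ℕ) : rr (2 * m) = rr m := by
  have hw : (⟨1, 1⟩ : GaussianInt).norm = (2 : ℕ) := by simp [norm_eq']
  rw [rr, rr, ← ncard_mul_image ⟨1, 1⟩ (by simp [Zsqrtd.ext_iff]) (SS m)]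
  congr 1
  ext z
  rw [mem_mul_image _ 2 m (by norm_num) hw]
  refine ⟨fun h => ⟨?_, h⟩, fun h => h.2⟩
  obtain ⟨a, b⟩ := z
  simp only [SS, Set.mem_ofPred_eq, norm_eq'] at h
  push_cast at h
  have h2 : (a + b) % 2 = 0 := by
    have : (a^2 + b^2) % 2 = 0 := by omega
    rcases Int.emod_two_eq_zero_or_one a with h1 | h1 <;>
    rcases Int.emod_two_eq_zero_or_one b with h3 | h3 <;>
    simp [pow_two, Int.add_emod, Int.mul_emod, h1, h3] at this ⊢
  refine ⟨⟨(a + b) / 2, (b - a) / 2⟩, ?_⟩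
  simp only [Zsqrtd.ext_iff, Zsqrtd.re_mul, Zsqrtd.im_mul]
  omega

lemma dvd_star {w z : GaussianInt} : w ∣ star z ↔ star w ∣ z := by
  constructor
  · rintro ⟨u, hu⟩
    refine ⟨star u, ?_⟩
    rw [← star_star z, hu, star_mul']
  · rintro ⟨u, rfl⟩
    refine ⟨star u, ?_⟩
    rw [star_mul', star_star]

lemma prime_dvd (w : GaussianInt) (hw : Prime w) (z : GaussianInt) (n : ℕ) (hz : z ∈ SS n)
    (h : w ∣ (n : GaussianInt)) : w ∣ z ∨ star w ∣ z := by
  have : (n : GaussianInt) = z * star z := by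
    rw [← Zsqrtd.norm_eq_mul_conj, show z.norm = n from hz]; simp
  rw [this] at h
  exact (hw.dvd_or_dvd h).imp_right dvd_star.1

lemma norm_nat (p : ℕ) : (p : GaussianInt).norm = ((p * p : ℕ) : ℤ) := by
  rw [Zsqrtd.norm_natCast]; push_cast; rfl

lemma dvd_of_norm3 (p : ℕ) (hp : p.Prime) (h3 : p % 4 = 3) (m : ℕ) (z : GaussianInt)
    (hz : z ∈ SS (p * m)) : (p : GaussianInt) ∣ z := by
  have := Fact.mk hp
  have := prime_dvd _ (GaussianInt.prime_of_nat_prime_of_mod_four_eq_three p h3) z _ hz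
    (by push_cast; exact dvd_mul_right _ _)
  simpa using this

lemma pp_dvd (p m : ℕ) (hp : p ≠ 0) (z : GaussianInt)
    (hz : z ∈ SS (p * m)) (h : (p : GaussianInt) ∣ z) : p ∣ m := by
  obtain ⟨u, rfl⟩ := h
  simp only [SS, Set.mem_ofPred_eq, Zsqrtd.norm_mul, norm_nat] at hz
  push_cast at hz
  have : (p : ℤ) * u.norm = m := by
    apply mul_left_cancel₀ (a := (p : ℤ)) (by exact_mod_cast hp); rw [← hz]; ring
  exact Int.natCast_dvd_natCast.1 ⟨_, this.symm⟩

lemma rr_three_a (p : ℕ) (hp : p.Prime) (h3 : p % 4 = 3) (m : ℕ) (hm : ¬ p ∣ m) :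
    rr (p * m) = 0 := by
  have : SS (p * m) = ∅ := by
    ext z
    simp only [Set.mem_empty_iff_false, iff_false]
    intro hz
    exact hm (pp_dvd p m hp.ne_zero z hz (dvd_of_norm3 p hp h3 m z hz))
  rw [rr, this, Set.ncard_empty]

lemma rr_three_b (p : ℕ) (hp : p.Prime) (h3 : p % 4 = 3) (m : ℕ) :
    rr (p * (p * m)) = rr m := by
  rw [rr, rr, ← ncard_mul_image (p : GaussianInt) (by exact_mod_cast hp.ne_zero) (SS m)]
  congr 1
  ext z
  rw [mem_mul_image _ (p * p) m (by simp [hp.ne_zero]) (norm_nat p), mul_assoc]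
  exact ⟨fun h => ⟨dvd_of_norm3 p hp h3 _ z h, h⟩, fun h => h.2⟩

lemma exists_pi (p : ℕ) (hp : p.Prime) (h1 : p % 4 = 1) :
    ∃ w : GaussianInt, w.norm = p ∧ Prime w ∧ ¬ star w ∣ w ∧ Prime (star w) := by
  have := Fact.mk hp
  obtain ⟨a, b, hab⟩ := Nat.Prime.sq_add_sq (p := p) (by omega)
  have hn : ∀ u : GaussianInt, u.norm = p → Prime u := by
    intro u hu
    rw [← irreducible_iff_prime]
    refine ⟨?_, ?_⟩
    · intro h
      rw [← Zsqrtd.norm_eq_one_iff, hu] at h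
      exact hp.one_lt.ne' (by simpa using h)
    · intro x y hxy
      rw [hxy, Zsqrtd.norm_mul] at hu
      have : x.norm.natAbs * y.norm.natAbs = p := by
        rw [← Int.natAbs_mul, hu]; simp
      rw [← Zsqrtd.norm_eq_one_iff, ← Zsqrtd.norm_eq_one_iff]
      rcases (Nat.dvd_prime hp).1 ⟨_, this.symm⟩ with h | h
      · exact Or.inl h
      · right
        rw [h] at this
        exact Nat.eq_of_mul_eq_mul_left hp.pos (by omega)
  have hw : (⟨a, b⟩ : GaussianInt).norm = p := by rw [norm_eq', ← hab]; push_cast; rfl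
  refine ⟨⟨a, b⟩, hw, hn _ hw, ?_, hn _ (by rw [Zsqrtd.norm_conj, hw])⟩
  intro h
  have h2 : star (⟨a, b⟩ : GaussianInt) ∣ ((2 * a : ℕ) : GaussianInt) := by
    have : ((2 * a : ℕ) : GaussianInt) = ⟨a, b⟩ + star (⟨a, b⟩ : GaussianInt) := by
      ext <;> simp [two_mul]
    rw [this]
    exact dvd_add h (dvd_refl _)
  obtain ⟨u, hu⟩ := h2
  have h3 := congrArg Zsqrtd.norm hu
  rw [Zsqrtd.norm_mul, Zsqrtd.norm_conj, hw, norm_nat] at h3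
  have h4 : p ∣ (2 * a) * (2 * a) := Int.natCast_dvd_natCast.1 ⟨_, h3⟩
  have h5 : p ∣ 2 * a := by rcases hp.dvd_mul.1 h4 with h | h <;> exact h
  have h6 : p ∣ a := by
    rcases hp.dvd_mul.1 h5 with h | h
    · have := (Nat.prime_dvd_prime_iff_eq hp Nat.prime_two).1 h
      omega
    · exact h
  have h7 : a < p := by
    by_contra hc
    have := hp.two_le
    nlinarith [Nat.zero_le (b^2)]
  have h8 : a = 0 := Nat.eq_zero_of_dvd_of_lt h6 h7
  rw [h8] at hab
  have : p = b ^ 2 := by rw [← hab]; ring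
  exact (Nat.Prime.not_prime_pow (le_refl 2)) (this ▸ hp)

lemma rr_onemod (p : ℕ) (hp : p.Prime) (h1 : p % 4 = 1) (m : ℕ) :
    rr (p * m) + {z ∈ SS (p * m) | (p : GaussianInt) ∣ z}.ncard = 2 * rr m := by
  obtain ⟨w, hw, hwp, hws, hsp⟩ := exists_pi p hp h1
  have hw' : (star w).norm = p := by rw [Zsqrtd.norm_conj, hw]
  have hpw : (p : GaussianInt) = w * star w := by
    rw [← Zsqrtd.norm_eq_mul_conj, hw]; simp
  have e1 : SS (p * m) = ((fun z => w * z) '' SS m) ∪ ((fun z => star w * z) '' SS m) := by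
    ext z
    rw [Set.mem_union, mem_mul_image _ p m hp.ne_zero hw, mem_mul_image _ p m hp.ne_zero hw',
      ← or_and_right]
    refine ⟨fun h => ⟨?_, h⟩, fun h => h.2⟩
    refine prime_dvd w hwp z _ h ?_
    push_cast
    rw [hpw, mul_assoc]
    exact dvd_mul_right _ _
  have e2 : {z ∈ SS (p * m) | (p : GaussianInt) ∣ z} =
      ((fun z => w * z) '' SS m) ∩ ((fun z => star w * z) '' SS m) := by
    ext z
    rw [Set.mem_inter_iff, mem_mul_image _ p m hp.ne_zero hw, mem_mul_image _ p m hp.ne_zero hw']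
    simp only [Set.mem_ofPred_eq]
    constructor
    · rintro ⟨h, h'⟩
      rw [hpw] at h'
      exact ⟨⟨dvd_of_mul_right_dvd h', h⟩, dvd_of_mul_left_dvd h', h⟩
    · rintro ⟨⟨⟨u, rfl⟩, h⟩, h', -⟩
      refine ⟨h, ?_⟩
      rw [hpw]
      exact mul_dvd_mul_left _ ((hsp.dvd_or_dvd h').resolve_left hws)
  rw [rr, e2, e1, Set.ncard_union_add_ncard_inter _ _ ((SS_finite m).image _)
    ((SS_finite m).image _), ncard_mul_image _ hwp.ne_zero, ncard_mul_image _ hsp.ne_zero, rr]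
  ring

lemma rr_one_a (p : ℕ) (hp : p.Prime) (h1 : p % 4 = 1) (m : ℕ) (hm : ¬ p ∣ m) :
    rr (p * m) = 2 * rr m := by
  rw [← rr_onemod p hp h1 m]
  have : {z ∈ SS (p * m) | (p : GaussianInt) ∣ z} = ∅ := by
    ext z
    simp only [Set.mem_ofPred_eq, Set.mem_empty_iff_false, iff_false]
    rintro ⟨hz, h⟩
    exact hm (pp_dvd p m hp.ne_zero z hz h)
  rw [this, Set.ncard_empty]; rfl

lemma rr_one_b (p : ℕ) (hp : p.Prime) (h1 : p % 4 = 1) (m : ℕ) :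
    rr (p * (p * m)) + rr m = 2 * rr (p * m) := by
  rw [← rr_onemod p hp h1 (p * m)]
  congr 1
  rw [rr, ← ncard_mul_image (p : GaussianInt) (by exact_mod_cast hp.ne_zero) (SS m)]
  congr 1
  ext z
  rw [mem_mul_image _ (p * p) m (by simp [hp.ne_zero]) (norm_nat p), mul_assoc]
  exact and_comm

noncomputable def chi : DirichletCharacter ℂ 4 := ZMod.χ₄.ringHomComp (Int.castRingHom ℂ)

lemma chi_apply (n : ℕ) : chi n = ((if n % 2 = 0 then 0 else if n % 4 = 1 then 1 else -1 : ℤ) : ℂ) := by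
  rw [← ZMod.χ₄_nat_eq_if_mod_four]; rfl

lemma rr_rec_a (p : ℕ) (hp : p.Prime) (m : ℕ) (hm : ¬ p ∣ m) :
    (rr (p * m) : ℂ) = (1 + chi p) * rr m := by
  rw [chi_apply]
  rcases hp.eq_two_or_odd with rfl | h
  · simp [rr_two]
  · rcases (by omega : p % 4 = 1 ∨ p % 4 = 3) with h' | h'
    · rw [rr_one_a p hp h' m hm]; simp [h, h']; norm_num
    · rw [rr_three_a p hp h' m hm]; simp [h, h']

lemma rr_rec_b (p : ℕ) (hp : p.Prime) (m : ℕ) :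
    (rr (p * (p * m)) : ℂ) = (1 + chi p) * rr (p * m) - chi p * rr m := by
  rw [chi_apply]
  rcases hp.eq_two_or_odd with rfl | h
  · simp [rr_two]
  · rcases (by omega : p % 4 = 1 ∨ p % 4 = 3) with h' | h'
    · rw [eq_sub_iff_add_eq]
      simp only [h, h']
      have := rr_one_b p hp h' m
      have := congrArg (Nat.cast : ℕ → ℂ) this
      push_cast at this
      norm_num
      exact this
    · rw [rr_three_b p hp h' m]; simp [h, h']

lemma zm_pow (p : ℕ) (hp : p.Prime) (k m : ℕ) (hm : ¬ p ∣ m) :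
    chi.zetaMul (p ^ k * m) = (∑ i ∈ Finset.range (k + 1), chi p ^ i) * chi.zetaMul m := by
  rw [chi.isMultiplicative_zetaMul.map_mul_of_coprime
    (Nat.Coprime.pow_left _ ((Nat.Prime.coprime_iff_not_dvd hp).2 hm))]
  congr 1
  rw [DirichletCharacter.zetaMul, ArithmeticFunction.coe_zeta_mul_apply,
    Nat.sum_divisors_prime_pow hp]
  refine Finset.sum_congr rfl fun i _ => ?_
  rw [← chi.apply_eq_toArithmeticFunction_apply (pow_ne_zero _ hp.ne_zero), Nat.cast_pow, map_pow]

lemma zm_rec_a (p : ℕ) (hp : p.Prime) (m : ℕ) (hm : ¬ p ∣ m) :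
    chi.zetaMul (p * m) = (1 + chi p) * chi.zetaMul m := by
  have := zm_pow p hp 1 m hm
  simpa [Finset.sum_range_succ] using this

lemma zm_rec_b (p : ℕ) (hp : p.Prime) (m : ℕ) (hm : m ≠ 0) :
    chi.zetaMul (p * (p * m)) = (1 + chi p) * chi.zetaMul (p * m) - chi p * chi.zetaMul m := by
  obtain ⟨k, n, hn, rfl⟩ := Nat.exists_eq_pow_mul_and_not_dvd hm p hp.ne_one
  have e1 : p * (p ^ k * n) = p ^ (k + 1) * n := by ring
  have e2 : p * (p ^ (k + 1) * n) = p ^ (k + 2) * n := by ring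
  rw [e1, e2, zm_pow p hp _ n hn, zm_pow p hp _ n hn, zm_pow p hp _ n hn,
    Finset.sum_range_succ _ (k + 2), Finset.sum_range_succ _ (k + 1)]
  ring

lemma rr_eq (n : ℕ) (hn : n ≠ 0) : (rr n : ℂ) = 4 * chi.zetaMul n := by
  induction n using Nat.strong_induction_on with
  | _ n ih =>
    rcases eq_or_ne n 1 with rfl | h1
    · rw [rr_one, chi.isMultiplicative_zetaMul.map_one]; norm_num
    · obtain ⟨m, hm⟩ := n.minFac_dvd
      have hp := Nat.minFac_prime h1
      set p := n.minFac
      have hm0 : m ≠ 0 := by rintro rfl; simp at hm; exact hn hm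
      have hlt : m < n := by rw [hm]; exact lt_mul_left (Nat.pos_of_ne_zero hm0) hp.one_lt
      by_cases hd : p ∣ m
      · obtain ⟨q, hq⟩ := hd
        have hq0 : q ≠ 0 := by rintro rfl; simp at hq; exact hm0 hq
        have hlt' : q < m := by rw [hq]; exact lt_mul_left (Nat.pos_of_ne_zero hq0) hp.one_lt
        have i1 := ih m hlt hm0
        have i2 := ih q (hlt'.trans hlt) hq0
        rw [hm, hq, rr_rec_b p hp, zm_rec_b p hp q hq0, ← hq, i1, i2]
        ring
      · rw [hm, rr_rec_a p hp m hd, zm_rec_a p hp m hd, ih m hlt hm0]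
        ring

lemma lseries_zm : LSeries chi.zetaMul 2 = (π ^ 2 / 6 : ℝ) * LSeries (chi ·) 2 := by
  have h2 : 1 < (2 : ℂ).re := by norm_num
  rw [DirichletCharacter.zetaMul, ArithmeticFunction.LSeries_mul']
  · congr 1
    · have := ArithmeticFunction.LSeries_zeta_eq_riemannZeta h2
      rw [riemannZeta_two] at this
      push_cast
      rw [← this]
      rfl
    · exact (LSeries_congr chi.apply_eq_toArithmeticFunction_apply 2).symm
  · exact ArithmeticFunction.LSeriesSummable_zeta_iff.mpr h2
  · exact (LSeriesSummable_congr _ fun h ↦ (chi.apply_eq_toArithmeticFunction_apply h).symm).mpr <|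
      ZMod.LSeriesSummable_of_one_lt_re chi h2

lemma lseries_chi : LSeries (chi ·) 2 = (catalanConst : ℂ) := by
  have h2 : 1 < (2 : ℂ).re := by norm_num
  have hs : Summable (LSeries.term (chi ·) 2) := ZMod.LSeriesSummable_of_one_lt_re chi h2
  have e0 : ∀ k : ℕ, LSeries.term (chi ·) 2 (2 * k) = 0 := by
    intro k
    rcases eq_or_ne k 0 with rfl | hk
    · simp
    · rw [LSeries.term_of_ne_zero (by omega), chi_apply]; simp
  have e1 : ∀ k : ℕ, LSeries.term (chi ·) 2 (2 * k + 1) =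
      (((-1 : ℝ) ^ k / (2 * (k : ℝ) + 1) ^ 2 : ℝ) : ℂ) := by
    intro k
    rw [LSeries.term_of_ne_zero (by omega)]
    have : chi ((2 * k + 1 : ℕ) : ZMod 4) = (-1) ^ k := by
      have h := ZMod.χ₄_eq_neg_one_pow (n := 2 * k + 1) (by omega)
      have h' : (2 * k + 1) / 2 = k := by omega
      rw [h'] at h
      have h4 : chi ((2 * k + 1 : ℕ) : ZMod 4) =
          Int.castRingHom ℂ (ZMod.χ₄ ((2 * k + 1 : ℕ) : ZMod 4)) := rfl
      rw [h4, h, map_pow]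
      simp
    rw [this]
    push_cast
    norm_cast
  rw [LSeries, ← tsum_even_add_odd (hs.comp_injective (fun a b h => by simpa using h))
    (hs.comp_injective (fun a b h => by simpa using h))]
  simp only [Function.comp_def, e0, e1, tsum_zero, zero_add]
  rw [catalanConst, Complex.ofReal_tsum]

lemma hasSum_rr : HasSum (fun n : ℕ => (rr n : ℝ) * ((n : ℝ) ^ 2)⁻¹)
    (2 * π ^ 2 / 3 * catalanConst) := by
  have h2 : 1 < (2 : ℂ).re := by norm_num
  have h := (chi.LSeriesSummable_zetaMul h2).LSeriesHasSum
  rw [lseries_zm, lseries_chi] at h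
  have h := HasSum.mul_left (4 : ℂ) h
  rw [← Complex.hasSum_ofReal]
  convert! h using 1
  · ext n
    rcases eq_or_ne n 0 with rfl | hn
    · simp
    · rw [LSeries.term_of_ne_zero hn]
      push_cast
      rw [rr_eq n hn]
      norm_cast
      field_simp
  · push_cast; ring

theorem stmt_15 :
    ∑' p : {p : ℤ × ℤ // p ≠ 0},
        ((((p : ℤ × ℤ).1 : ℝ) ^ 2 + ((p : ℤ × ℤ).2 : ℝ) ^ 2) ^ 2)⁻¹ =
      2 * π ^ 2 / 3 * catalanConst := by
  have A : HasSum (fun z : GaussianInt => (((z.norm.natAbs : ℕ) : ℝ) ^ 2)⁻¹)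
      (2 * π ^ 2 / 3 * catalanConst) := by
    have hmem : ∀ n : ℕ, {z : GaussianInt | z.norm.natAbs = n} = SS n := by
      intro n
      ext z
      have := GaussianInt.abs_natCast_norm z
      simp only [SS, Set.mem_ofPred_eq]
      omega
    rw [← (Equiv.sigmaFiberEquiv (fun z : GaussianInt => z.norm.natAbs)).hasSum_iff]
    have hfib : ∀ n : ℕ, HasSum (fun y : {z : GaussianInt // z.norm.natAbs = n} =>
        (((y.1.norm.natAbs : ℕ) : ℝ) ^ 2)⁻¹) ((rr n : ℝ) * ((n : ℝ) ^ 2)⁻¹) := by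
      intro n
      have hf : Finite {z : GaussianInt // z.norm.natAbs = n} := by
        have := SS_finite n
        rw [← hmem n] at this
        exact this
      have := Fintype.ofFinite {z : GaussianInt // z.norm.natAbs = n}
      convert! hasSum_fintype _ using 1
      rw [Finset.sum_congr rfl (fun y _ => by rw [y.2]), Finset.sum_const, nsmul_eq_mul]
      congr 2
      rw [rr, ← hmem n, ← Nat.card_coe_set_eq, Finset.card_univ, ← Nat.card_eq_fintype_card]
      rfl
    have hsum := hasSum_rr
    have hS : Summable ((fun z : GaussianInt => (((z.norm.natAbs : ℕ) : ℝ) ^ 2)⁻¹) ∘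
        (Equiv.sigmaFiberEquiv (fun z : GaussianInt => z.norm.natAbs))) := by
      rw [summable_sigma_of_nonneg (fun x => by simp only [Function.comp]; positivity)]
      refine ⟨fun n => (hfib n).summable, ?_⟩
      convert! hsum.summable using 2 with n
      exact (hfib n).tsum_eq
    have h3 := hS.hasSum.sigma (fun n => hfib n)
    rw [← h3.unique hsum]
    exact hS.hasSum
  let e : ℤ × ℤ ≃ GaussianInt :=
    ⟨fun q => ⟨q.1, q.2⟩, fun z => (z.re, z.im), fun _ => rfl, fun _ => rfl⟩
  rw [← e.hasSum_iff] at A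
  rw [← A.tsum_eq]
  have B : ∀ q : ℤ × ℤ, ((fun z : GaussianInt => (((z.norm.natAbs : ℕ) : ℝ) ^ 2)⁻¹) ∘ e) q =
      (((q.1 : ℝ) ^ 2 + (q.2 : ℝ) ^ 2) ^ 2)⁻¹ := by
    intro q
    simp only [Function.comp]
    rw [GaussianInt.natCast_natAbs_norm, norm_eq']
    push_cast
    rfl
  rw [tsum_congr B]
  refine tsum_subtype_eq_of_support_subset (s := {q : ℤ × ℤ | q ≠ 0})
    (f := fun q : ℤ × ℤ => (((q.1 : ℝ) ^ 2 + (q.2 : ℝ) ^ 2) ^ 2)⁻¹) ?_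
  intro q hq h0
  apply hq
  simp [h0]
end

section
/- ∑_{(n,m)∈ℤ², (n,m)≠(0,0)} 1/(n² + 4m²)² = (7π²/24)·G, where G is Catalan's constant. -/
open Real

def gN (n : ℕ) : Set GaussianInt := {z | Zsqrtd.norm z = (n : ℤ)}

lemma gN_norm (z : GaussianInt) : Zsqrtd.norm z = z.re ^ 2 + z.im ^ 2 := by
  rw [Zsqrtd.norm_def]; ring

lemma gN_finite (n : ℕ) : (gN n).Finite := by
  have h : ((Set.Icc (-(n:ℤ)) n) ×ˢ (Set.Icc (-(n:ℤ)) n)).Finite :=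
    (Set.finite_Icc _ _).prod (Set.finite_Icc _ _)
  refine (h.image (fun p => (⟨p.1, p.2⟩ : GaussianInt))).subset ?_
  intro z hz
  have hz' : z.re ^ 2 + z.im ^ 2 = (n:ℤ) := by rw [← gN_norm]; exact hz
  refine ⟨(z.re, z.im), ?_, rfl⟩
  simp only [Set.mem_prod, Set.mem_Icc]
  refine ⟨⟨?_, ?_⟩, ⟨?_, ?_⟩⟩ <;> nlinarith [sq_nonneg z.re, sq_nonneg z.im, Int.le_self_sq z.re, Int.le_self_sq z.im, Int.le_self_sq (-z.re), Int.le_self_sq (-z.im)]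

lemma gN_mul (w : GaussianInt) (k n : ℕ) (hk : 0 < k) (hw : Zsqrtd.norm w = (k:ℤ)) :
    ({z | z ∈ gN (k * n) ∧ w ∣ z}).ncard = (gN n).ncard := by
  have hw0 : w ≠ 0 := by
    rintro rfl
    simp at hw; omega
  have : {z | z ∈ gN (k * n) ∧ w ∣ z} = (fun x => w * x) '' gN n := by
    ext z
    simp only [gN, Set.mem_ofPred_eq, Set.mem_image]
    constructor
    · rintro ⟨h, x, rfl⟩
      refine ⟨x, ?_, rfl⟩
      rw [Zsqrtd.norm_mul, hw] at h
      push_cast at h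
      exact mul_left_cancel₀ (by positivity) h
    · rintro ⟨x, h, rfl⟩
      refine ⟨?_, dvd_mul_right _ _⟩
      rw [Zsqrtd.norm_mul, hw, h]; push_cast; rfl
  rw [this, Set.ncard_image_of_injective _ (mul_right_injective₀ hw0)]

lemma gN_p (p n : ℕ) (hp : 0 < p) :
    ({z | z ∈ gN (p * n) ∧ (p : GaussianInt) ∣ z}).ncard
      = if p ∣ n then (gN (n / p)).ncard else 0 := by
  have hn : Zsqrtd.norm (p : GaussianInt) = ((p * p : ℕ) : ℤ) := by simp
  split_ifs with h
  · obtain ⟨m, rfl⟩ := h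
    rw [Nat.mul_div_cancel_left _ hp, ← gN_mul (p : GaussianInt) (p * p) m (by positivity) hn, mul_assoc]
  · rw [Set.ncard_eq_zero ((gN_finite (p*n)).subset (fun z hz => hz.1))]
    ext z
    simp only [gN, Set.mem_ofPred_eq, Set.mem_empty_iff_false, iff_false, not_and]
    rintro h1 ⟨x, rfl⟩
    rw [Zsqrtd.norm_mul, hn] at h1
    push_cast at h1
    rw [mul_assoc] at h1
    have := mul_left_cancel₀ (by positivity) h1
    apply h
    have : (p:ℤ) ∣ n := ⟨_, this.symm⟩
    exact_mod_cast this

lemma gprime (w : GaussianInt) (p : ℕ) (hp : p.Prime) (hw : Zsqrtd.norm w = (p:ℤ)) : Prime w := by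
  rw [← irreducible_iff_prime]
  refine ⟨fun h => ?_, fun a b hab => ?_⟩
  · rw [← Zsqrtd.norm_eq_one_iff, hw] at h
    simp at h; exact hp.one_lt.ne' h
  · have h1 : (Zsqrtd.norm a).natAbs * (Zsqrtd.norm b).natAbs = p := by
      rw [← Int.natAbs_mul, ← Zsqrtd.norm_mul, ← hab, hw]; simp
    rw [← Zsqrtd.norm_eq_one_iff, ← Zsqrtd.norm_eq_one_iff]
    have := Nat.prime_mul_iff.1 (h1 ▸ hp)
    tauto

lemma gdvd_norm (w z : GaussianInt) (p : ℕ) (hw : Zsqrtd.norm w = (p:ℤ)) (hp : p.Prime) (n : ℕ)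
    (hz : z ∈ gN (p * n)) : w ∣ z ∨ star w ∣ z := by
  have h1 : w ∣ z * star z := by
    rw [← Zsqrtd.norm_eq_mul_conj, show Zsqrtd.norm z = _ from hz]
    push_cast
    have : (p : GaussianInt) = w * star w := by
      rw [← Zsqrtd.norm_eq_mul_conj, hw]; simp
    rw [this, mul_assoc]; exact dvd_mul_right _ _
  rcases (gprime w p hp hw).dvd_or_dvd h1 with h | ⟨x, h⟩
  · exact Or.inl h
  · right
    refine ⟨star x, ?_⟩
    have := congrArg star h
    rw [star_star, star_mul] at this
    rw [this, mul_comm]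

lemma rec1 (p n : ℕ) (hp : p.Prime) (h4 : p % 4 = 1) :
    (gN (p * n)).ncard + (if p ∣ n then (gN (n / p)).ncard else 0) = 2 * (gN n).ncard := by
  have := Fact.mk hp
  obtain ⟨a, b, hab⟩ := Nat.Prime.sq_add_sq (p := p) (by omega)
  set w : GaussianInt := ⟨a, b⟩ with hwdef
  have hw : Zsqrtd.norm w = (p:ℤ) := by
    rw [gN_norm, ← hab]; push_cast; rfl
  have hw' : Zsqrtd.norm (star w) = (p:ℤ) := by rw [Zsqrtd.norm_conj, hw]
  have hpw : (p : GaussianInt) = w * star w := by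
    rw [← Zsqrtd.norm_eq_mul_conj, hw]; simp
  have hnd : ¬ w ∣ star w := by
    intro h
    have h2 : w ∣ ((2 * a : ℤ) : GaussianInt) := by
      have : ((2 * a : ℤ) : GaussianInt) = w + star w := by
        ext <;> simp [hwdef]; ring
      rw [this]; exact dvd_add dvd_rfl h
    obtain ⟨x, hx⟩ := h2
    have h3 := congrArg Zsqrtd.norm hx
    rw [Zsqrtd.norm_mul, hw, Zsqrtd.norm_intCast] at h3
    have h4' : (p:ℤ) ∣ ((2 * a * (2 * a) : ℕ) : ℤ) := ⟨_, by push_cast; exact h3⟩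
    have h5 : p ∣ 2 * a * (2 * a) := by exact_mod_cast h4'
    have h6 : p ∣ 2 * a := by rcases hp.dvd_mul.1 h5 with h | h <;> exact h
    rcases hp.dvd_mul.1 h6 with h | h
    · have := Nat.le_of_dvd (by norm_num) h
      have := hp.two_le
      omega
    · have hb : p ∣ b ^ 2 := by
        have : p ∣ a ^ 2 + b ^ 2 := by rw [hab]
        exact (Nat.dvd_add_right (dvd_pow h two_ne_zero)).1 this
      have hb := hp.dvd_of_dvd_pow hb
      obtain ⟨c, rfl⟩ := h
      obtain ⟨d, rfl⟩ := hb
      have : p * (p * (c^2 + d^2)) = p * 1 := by linarith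
      have := Nat.eq_of_mul_eq_mul_left hp.pos this
      exact hp.one_lt.ne' (Nat.eq_one_of_mul_eq_one_right this)
  have e1 := gN_mul w p n hp.pos hw
  have e2 := gN_mul (star w) p n hp.pos hw'
  have e3 : 2 * (gN n).ncard = ({z | z ∈ gN (p * n) ∧ w ∣ z}).ncard
      + ({z | z ∈ gN (p * n) ∧ star w ∣ z}).ncard := by omega
  rw [← gN_p p n hp.pos, e3]
  rw [← Set.ncard_union_add_ncard_inter {z | z ∈ gN (p * n) ∧ w ∣ z} {z | z ∈ gN (p * n) ∧ star w ∣ z} ((gN_finite (p*n)).subset (fun z hz => hz.1)) ((gN_finite (p*n)).subset (fun z hz => hz.1))]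
  congr 2
  · ext z
    simp only [Set.mem_union, Set.mem_ofPred_eq]
    constructor
    · intro h
      rcases gdvd_norm w z p hw hp n h with h' | h' <;> tauto
    · tauto
  · ext z
    simp only [Set.mem_inter_iff, Set.mem_ofPred_eq]
    constructor
    · rintro ⟨h, h'⟩
      rw [hpw] at h'
      exact ⟨⟨h, (dvd_mul_right _ _).trans h'⟩, ⟨h, (dvd_mul_left _ _).trans h'⟩⟩
    · rintro ⟨⟨h, h1⟩, ⟨_, x, rfl⟩⟩
      refine ⟨h, ?_⟩
      rcases (gprime w p hp hw).dvd_or_dvd h1 with h | h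
      · exact absurd h hnd
      · rw [hpw, mul_comm]; exact mul_dvd_mul_left _ h

lemma rec2 (n : ℕ) : (gN (2 * n)).ncard = (gN n).ncard := by
  have hw : Zsqrtd.norm (⟨1, 1⟩ : GaussianInt) = ((2:ℕ):ℤ) := by rw [gN_norm]; norm_num
  rw [← gN_mul ⟨1, 1⟩ 2 n (by norm_num) hw]
  congr 1
  ext z
  simp only [Set.mem_ofPred_eq]
  refine ⟨fun h => ⟨h, ?_⟩, fun h => h.1⟩
  rcases gdvd_norm _ z 2 hw Nat.prime_two n h with h | h
  · exact h
  · refine dvd_trans ⟨⟨0,-1⟩, ?_⟩ h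
    ext <;> simp

lemma rec3 (p n : ℕ) (hp : p.Prime) (h4 : p % 4 = 3) :
    (gN (p * n)).ncard = (if p ∣ n then (gN (n / p)).ncard else 0) := by
  have := Fact.mk hp
  rw [← gN_p p n hp.pos]
  congr 1
  ext z
  simp only [Set.mem_ofPred_eq]
  refine ⟨fun h => ⟨h, ?_⟩, fun h => h.1⟩
  have hP : Prime (p : GaussianInt) := GaussianInt.prime_of_nat_prime_of_mod_four_eq_three p h4
  have h1 : (p : GaussianInt) ∣ z * star z := by
    rw [← Zsqrtd.norm_eq_mul_conj, show Zsqrtd.norm z = _ from h]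
    push_cast
    exact dvd_mul_right _ _
  rcases hP.dvd_or_dvd h1 with h | ⟨x, h⟩
  · exact h
  · refine ⟨star x, ?_⟩
    have := congrArg star h
    rw [star_star, star_mul] at this
    rw [this, mul_comm]; simp

lemma gN_one : (gN 1).ncard = 4 := by
  have : gN 1 = (({⟨1,0⟩, ⟨-1,0⟩, ⟨0,1⟩, ⟨0,-1⟩} : Finset GaussianInt) : Set GaussianInt) := by
    ext ⟨a, b⟩
    simp only [gN, Set.mem_ofPred_eq, gN_norm, Finset.coe_insert, Finset.coe_singleton, Set.mem_insert_iff, Set.mem_singleton_iff, Zsqrtd.mk.injEq]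
    constructor
    · intro h
      push_cast at h
      have ha : a ≤ 1 := by nlinarith
      have ha' : -1 ≤ a := by nlinarith
      have hb : b ≤ 1 := by nlinarith
      have hb' : -1 ≤ b := by nlinarith
      interval_cases a <;> interval_cases b <;> simp_all
    · rintro (⟨rfl, rfl⟩ | ⟨rfl, rfl⟩ | ⟨rfl, rfl⟩ | ⟨rfl, rfl⟩) <;> norm_num
  rw [this, Set.ncard_coe_finset]
  rfl

def gD (n : ℕ) : ℤ := ∑ d ∈ n.divisors, ZMod.χ₄ (d : ZMod 4)

lemma gD_p (p n : ℕ) (hp : 0 < p) (hn : 0 < n) :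
    ∑ d ∈ n.divisors with p ∣ d, ZMod.χ₄ (d : ZMod 4)
      = if p ∣ n then ZMod.χ₄ (p : ZMod 4) * gD (n / p) else 0 := by
  split_ifs with h
  · obtain ⟨m, rfl⟩ := h
    have hm : m ≠ 0 := by rintro rfl; simp at hn
    rw [Nat.mul_div_cancel_left _ hp, gD, Finset.mul_sum]
    symm
    refine Finset.sum_bij (fun d _ => p * d) ?_ ?_ ?_ ?_
    · intro d hd
      simp only [Finset.mem_filter, Nat.mem_divisors] at hd ⊢
      exact ⟨⟨mul_dvd_mul_left _ hd.1, hn.ne'⟩, dvd_mul_right _ _⟩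
    · intro a _ b _ hab
      exact Nat.eq_of_mul_eq_mul_left hp hab
    · intro b hb
      simp only [Finset.mem_filter, Nat.mem_divisors] at hb
      obtain ⟨⟨h1, _⟩, c, rfl⟩ := hb
      exact ⟨c, by simp only [Nat.mem_divisors]; exact ⟨Nat.dvd_of_mul_dvd_mul_left hp h1, hm⟩, rfl⟩
    · intro a _
      push_cast; rw [map_mul]
  · apply Finset.sum_eq_zero
    intro d hd
    simp only [Finset.mem_filter, Nat.mem_divisors] at hd
    exact absurd (hd.2.trans hd.1.1) h

lemma recD (p n : ℕ) (hp : p.Prime) (hn : 0 < n) :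
    gD (p * n) = (1 + ZMod.χ₄ (p : ZMod 4)) * gD n
      - ZMod.χ₄ (p : ZMod 4) * (if p ∣ n then gD (n / p) else 0) := by
  have h1 := gD_p p (p * n) hp.pos (by have := hp.pos; positivity)
  have h2 := gD_p p n hp.pos hn
  rw [if_pos (dvd_mul_right _ _), Nat.mul_div_cancel_left _ hp.pos] at h1
  have h3 : ∑ d ∈ (p * n).divisors with ¬ p ∣ d, ZMod.χ₄ (d : ZMod 4) = ∑ d ∈ n.divisors with ¬ p ∣ d, ZMod.χ₄ (d : ZMod 4) := by
    congr 1
    ext d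
    simp only [Finset.mem_filter, Nat.mem_divisors]
    constructor
    · rintro ⟨⟨h, _⟩, h'⟩
      exact ⟨⟨((Nat.Prime.coprime_iff_not_dvd hp).2 h').symm.dvd_of_dvd_mul_left h, hn.ne'⟩, h'⟩
    · rintro ⟨⟨h, _⟩, h'⟩
      exact ⟨⟨h.mul_left _, mul_ne_zero hp.ne_zero hn.ne'⟩, h'⟩
  have h4 := Finset.sum_filter_add_sum_filter_not (p * n).divisors (fun d => p ∣ d) (fun d => ZMod.χ₄ (d : ZMod 4))
  have h5 := Finset.sum_filter_add_sum_filter_not (n).divisors (fun d => p ∣ d) (fun d => ZMod.χ₄ (d : ZMod 4))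
  rw [h1, h3] at h4
  rw [h2] at h5
  have e1 : gD (p * n) = ∑ d ∈ (p*n).divisors, ZMod.χ₄ (d : ZMod 4) := rfl
  have e2 : gD n = ∑ d ∈ n.divisors, ZMod.χ₄ (d : ZMod 4) := rfl
  rw [← e1] at h4
  rw [← e2] at h5
  split_ifs at h5 ⊢ <;> linarith

lemma recN (p n : ℕ) (hp : p.Prime) :
    ((gN (p * n)).ncard : ℤ) = (1 + ZMod.χ₄ (p : ZMod 4)) * (gN n).ncard
      - ZMod.χ₄ (p : ZMod 4) * (if p ∣ n then ((gN (n / p)).ncard : ℤ) else 0) := by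
  rcases hp.eq_two_or_odd with rfl | h
  · rw [rec2]
    have : ZMod.χ₄ ((2:ℕ) : ZMod 4) = 0 := by decide
    rw [this]; ring
  · have : p % 4 = 1 ∨ p % 4 = 3 := by omega
    rcases this with h4 | h4
    · rw [ZMod.χ₄_nat_one_mod_four h4]
      have := rec1 p n hp h4
      split_ifs at this ⊢ <;> linarith
    · rw [ZMod.χ₄_nat_three_mod_four h4]
      have := rec3 p n hp h4
      split_ifs at this ⊢ <;> linarith

lemma two_sq (n : ℕ) (hn : 0 < n) : ((gN n).ncard : ℤ) = 4 * gD n := by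
  induction n using Nat.strong_induction_on with
  | _ n ih =>
    by_cases h1 : n = 1
    · subst h1; rw [gN_one]; simp [gD]
    · obtain ⟨p, hp, m, rfl⟩ := Nat.exists_prime_and_dvd h1
      have hm : 0 < m := Nat.pos_of_mul_pos_left hn
      have hlt : m < p * m := by nlinarith [hp.two_le]
      rw [recN p m hp, recD p m hp hm, ih m hlt hm]
      split_ifs with h
      · rw [ih (m / p) ((Nat.div_le_self _ _).trans_lt hlt) (Nat.div_pos (Nat.le_of_dvd hm h) hp.pos)]
        ring
      · ring

lemma hasSum_congr_aux {α : Type*} (f g : α → ℝ) (a : ℝ) (h : ∀ x, f x = g x) (hg : HasSum g a) :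
    HasSum f a := by
  rw [funext h]; exact hg

lemma chi_bound (x : ZMod 4) : |((ZMod.χ₄ x : ℤ) : ℝ)| ≤ 1 := by
  have : ∀ x : ZMod 4, |ZMod.χ₄ x| ≤ 1 := by decide
  exact_mod_cast this x

lemma chi_summable : Summable (fun d : ℕ => ((ZMod.χ₄ (d : ZMod 4) : ℤ) : ℝ) / (d : ℝ) ^ 2) := by
  refine Summable.of_norm_bounded (g := fun n : ℕ => (1 : ℝ) / (n : ℝ) ^ 2) hasSum_zeta_two.summable ?_
  intro d
  rw [norm_div, Real.norm_eq_abs, Real.norm_eq_abs, abs_of_nonneg (sq_nonneg (d:ℝ))]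
  gcongr
  exact chi_bound _

lemma chi_tsum : ∑' d : ℕ, ((ZMod.χ₄ (d : ZMod 4) : ℤ) : ℝ) / (d : ℝ) ^ 2 = catalanConst := by
  have hinj : Function.Injective (fun k : ℕ => 2 * k + 1) := fun a b h => by simpa using h
  rw [← hinj.tsum_eq]
  · unfold catalanConst
    congr 1
    ext n
    rw [ZMod.χ₄_eq_neg_one_pow (by omega)]
    rw [show (2 * n + 1) / 2 = n by omega]
    push_cast
    rfl
  · intro d hd
    by_contra h
    apply hd
    have h2 : d % 2 = 0 := by
      by_contra h2
      exact h ⟨d / 2, by simp only; omega⟩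
    have : ZMod.χ₄ (d : ZMod 4) = 0 := by
      rw [ZMod.χ₄_nat_eq_if_mod_four, if_pos h2]
    simp [this]

lemma gD_hasSum : HasSum (fun n : ℕ => (gD n : ℝ) / (n : ℝ) ^ 2) (catalanConst * (π ^ 2 / 6)) := by
  set f : ℕ → ℝ := fun d => ((ZMod.χ₄ (d : ZMod 4) : ℤ) : ℝ) / (d : ℝ) ^ 2 with hf
  set g : ℕ → ℝ := fun d => (1 : ℝ) / (d : ℝ) ^ 2 with hg
  have hs : Summable (fun x : ℕ × ℕ => f x.1 * g x.2) :=
    summable_mul_of_summable_norm chi_summable.norm hasSum_zeta_two.summable.norm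
  have hv : ∑' x : ℕ × ℕ, f x.1 * g x.2 = catalanConst * (π ^ 2 / 6) := by
    rw [← tsum_mul_tsum_of_summable_norm chi_summable.norm hasSum_zeta_two.summable.norm,
      chi_tsum, hasSum_zeta_two.tsum_eq]
  have := hs.hasSum.tsum_fiberwise (fun x : ℕ × ℕ => x.1 * x.2)
  rw [hv] at this
  refine hasSum_congr_aux _ _ _ ?_ this
  intro n
  beta_reduce
  by_cases hn : n = 0
  · subst hn
    symm
    simp only [Nat.cast_zero, ne_eq, OfNat.ofNat_ne_zero, not_false_eq_true, zero_pow, div_zero]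
    refine (tsum_congr ?_).trans tsum_zero
    rintro ⟨⟨a, b⟩, h⟩
    simp only [Set.mem_preimage, Set.mem_singleton_iff, mul_eq_zero] at h
    rcases h with rfl | rfl <;> simp [hf, hg]
  · have hset : (fun x : ℕ × ℕ => x.1 * x.2) ⁻¹' {n} = (n.divisorsAntidiagonal : Set (ℕ × ℕ)) := by
      ext x; simp [hn]
    rw [hset, Finset.tsum_subtype' n.divisorsAntidiagonal (fun x : ℕ × ℕ => f x.1 * g x.2)]
    rw [gD]
    rw [← Nat.map_div_right_divisors, Finset.sum_map]
    push_cast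
    rw [Finset.sum_div]
    refine Finset.sum_congr rfl fun d hd => ?_
    have hd' := (Nat.mem_divisors.1 hd).1
    obtain ⟨e, rfl⟩ := hd'
    have hd0 : 0 < d := Nat.pos_of_ne_zero (by rintro rfl; simp at hn)
    change _ = f d * g (d * e / d)
    rw [Nat.mul_div_cancel_left _ hd0]
    simp only [hf, hg]
    push_cast
    rw [div_mul_div_comm, mul_one, mul_pow]

lemma gauss_hasSum : HasSum (fun z : GaussianInt => (((Zsqrtd.norm z : ℤ) : ℝ) ^ 2)⁻¹)
    (4 * (catalanConst * (π ^ 2 / 6))) := by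
  set e := Equiv.sigmaFiberEquiv (fun z : GaussianInt => (Zsqrtd.norm z).natAbs) with he
  rw [← e.hasSum_iff]
  have hpt : ∀ n : ℕ, ∀ x : {z : GaussianInt // (Zsqrtd.norm z).natAbs = n},
      (((Zsqrtd.norm (e ⟨n, x⟩) : ℤ) : ℝ) ^ 2)⁻¹ = ((n : ℝ) ^ 2)⁻¹ := by
    intro n x
    have h1 : e ⟨n, x⟩ = x.1 := rfl
    have h2 : Zsqrtd.norm x.1 = (n : ℤ) := by
      have := x.2
      have h0 := GaussianInt.norm_nonneg x.1
      omega
    rw [h1, h2]; simp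
  have hset : ∀ n : ℕ, {z : GaussianInt | (Zsqrtd.norm z).natAbs = n} = gN n := by
    intro n
    ext z
    have h0 := GaussianInt.norm_nonneg z
    simp only [gN, Set.mem_ofPred_eq]
    omega
  have hcard : ∀ n : ℕ, Nat.card {z : GaussianInt // (Zsqrtd.norm z).natAbs = n} = (gN n).ncard := by
    intro n
    rw [← hset n]; rfl
  have hfin : ∀ n : ℕ, Finite {z : GaussianInt // (Zsqrtd.norm z).natAbs = n} := by
    intro n
    have := gN_finite n
    rw [← hset n] at this
    exact this
  have hsumfib : ∀ n : ℕ, ∑' x : {z : GaussianInt // (Zsqrtd.norm z).natAbs = n},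
      (((Zsqrtd.norm (e ⟨n, x⟩) : ℤ) : ℝ) ^ 2)⁻¹ = 4 * ((gD n : ℝ) / (n : ℝ) ^ 2) := by
    intro n
    simp_rw [hpt n]
    rw [tsum_const, hcard, nsmul_eq_mul]
    by_cases hn : n = 0
    · subst hn; simp
    · have := two_sq n (Nat.pos_of_ne_zero hn)
      have h2 : ((gN n).ncard : ℝ) = 4 * (gD n : ℝ) := by exact_mod_cast this
      rw [h2]; ring
  have hsm : Summable ((fun z : GaussianInt => (((Zsqrtd.norm z : ℤ) : ℝ) ^ 2)⁻¹) ∘ e) := by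
    rw [summable_sigma_of_nonneg]
    · refine ⟨fun n => ?_, ?_⟩
      · have := hfin n
        exact Summable.of_finite
      · refine (gD_hasSum.mul_left 4).summable.congr ?_
        intro n
        exact (hsumfib n).symm
    · intro x
      simp only [Function.comp]
      positivity
  have h1 := hsm.hasSum
  have h2 : ∑' x, ((fun z : GaussianInt => (((Zsqrtd.norm z : ℤ) : ℝ) ^ 2)⁻¹) ∘ e) x = 4 * (catalanConst * (π ^ 2 / 6)) := by
    rw [hsm.tsum_sigma, ← (gD_hasSum.mul_left 4).tsum_eq]
    exact tsum_congr hsumfib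
  rwa [h2] at h1

def gEq : ℤ × ℤ ≃ GaussianInt where
  toFun p := ⟨p.1, p.2⟩
  invFun z := (z.re, z.im)
  left_inv _ := rfl
  right_inv _ := rfl

noncomputable def hh (p : ℤ × ℤ) : ℝ := (((p.1 : ℝ) ^ 2 + (p.2 : ℝ) ^ 2) ^ 2)⁻¹

lemma hh_hasSum : HasSum hh (4 * (catalanConst * (π ^ 2 / 6))) := by
  have := gEq.hasSum_iff.2 gauss_hasSum
  convert this using 1
  ext p
  simp [hh, gEq, gN_norm]

lemma ind_hasSum (φ : ℤ × ℤ → ℤ × ℤ) (hφ : Function.Injective φ) :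
    HasSum ((Set.range φ).indicator hh) (∑' p, hh (φ p)) := by
  rw [← hasSum_subtype_iff_indicator]
  refine hφ.hasSum_range_iff.2 ?_
  exact (hh_hasSum.summable.comp_injective hφ).hasSum

theorem stmt_16 :
    ∑' p : {p : ℤ × ℤ // p ≠ 0},
        ((((p : ℤ × ℤ).1 : ℝ) ^ 2 + 4 * ((p : ℤ × ℤ).2 : ℝ) ^ 2) ^ 2)⁻¹ =
      7 * π ^ 2 / 24 * catalanConst := by
  have hA := hh_hasSum
  set A := 4 * (catalanConst * (π ^ 2 / 6)) with hAdef
  have i1 : Function.Injective (fun p : ℤ × ℤ => (p.1, 2 * p.2)) := by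
    rintro ⟨a, b⟩ ⟨c, d⟩ h; simp at h; ext <;> simp <;> omega
  have i2 : Function.Injective (fun p : ℤ × ℤ => (2 * p.2, p.1)) := by
    rintro ⟨a, b⟩ ⟨c, d⟩ h; simp at h; ext <;> simp <;> omega
  have i3 : Function.Injective (fun p : ℤ × ℤ => (p.1 - p.2, p.1 + p.2)) := by
    rintro ⟨a, b⟩ ⟨c, d⟩ h; simp at h; ext <;> simp <;> omega
  have i4 : Function.Injective (fun p : ℤ × ℤ => (2 * p.1, 2 * p.2)) := by
    rintro ⟨a, b⟩ ⟨c, d⟩ h; simp at h; ext <;> simp <;> omega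
  have s1 := ind_hasSum _ i1
  have s2 := ind_hasSum _ i2
  have s3 := ind_hasSum _ i3
  have s4 := ind_hasSum _ i4
  have t2 : ∑' p : ℤ × ℤ, hh (2 * p.2, p.1) = ∑' p : ℤ × ℤ, hh (p.1, 2 * p.2) :=
    tsum_congr fun p => by simp only [hh]; rw [add_comm]
  have t3 : ∑' p : ℤ × ℤ, hh (p.1 - p.2, p.1 + p.2) = A / 4 := by
    rw [← hA.tsum_eq, ← tsum_div_const]
    refine tsum_congr fun p => ?_
    simp only [hh]; push_cast
    rw [show ((p.1:ℝ) - p.2)^2 + ((p.1:ℝ) + p.2)^2 = 2 * ((p.1:ℝ)^2 + (p.2:ℝ)^2) by ring, mul_pow, mul_inv]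
    ring
  have t4 : ∑' p : ℤ × ℤ, hh (2 * p.1, 2 * p.2) = A / 16 := by
    rw [← hA.tsum_eq, ← tsum_div_const]
    refine tsum_congr fun p => ?_
    simp only [hh]; push_cast
    rw [show (2 * (p.1:ℝ))^2 + (2 * (p.2:ℝ))^2 = 4 * ((p.1:ℝ)^2 + (p.2:ℝ)^2) by ring, mul_pow, mul_inv]
    ring
  rw [t2] at s2
  rw [t3] at s3
  rw [t4] at s4
  set E := ∑' p : ℤ × ℤ, hh (p.1, 2 * p.2) with hE
  have key : E + E = A - A / 4 + 2 * (A / 16) := by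
    refine (s1.add s2).unique ?_
    refine hasSum_congr_aux _ _ _ ?_ ((hA.sub s3).add (s4.mul_left 2))
    intro q
    beta_reduce
    obtain ⟨a, b⟩ := q
    have r1 : (a, b) ∈ Set.range (fun p : ℤ × ℤ => (p.1, 2 * p.2)) ↔ b % 2 = 0 := by
      simp only [Set.mem_range, Prod.mk.injEq]
      exact ⟨by rintro ⟨p, h1, h2⟩; omega, fun h => ⟨(a, b / 2), rfl, by simp only; omega⟩⟩
    have r2 : (a, b) ∈ Set.range (fun p : ℤ × ℤ => (2 * p.2, p.1)) ↔ a % 2 = 0 := by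
      simp only [Set.mem_range, Prod.mk.injEq]
      exact ⟨by rintro ⟨p, h1, h2⟩; omega, fun h => ⟨(b, a / 2), by simp only; omega, rfl⟩⟩
    have r3 : (a, b) ∈ Set.range (fun p : ℤ × ℤ => (p.1 - p.2, p.1 + p.2)) ↔ (a + b) % 2 = 0 := by
      simp only [Set.mem_range, Prod.mk.injEq]
      exact ⟨by rintro ⟨p, h1, h2⟩; omega, fun h => ⟨((a + b) / 2, (b - a) / 2), by simp only; omega, by simp only; omega⟩⟩
    have r4 : (a, b) ∈ Set.range (fun p : ℤ × ℤ => (2 * p.1, 2 * p.2)) ↔ a % 2 = 0 ∧ b % 2 = 0 := by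
      simp only [Set.mem_range, Prod.mk.injEq]
      exact ⟨by rintro ⟨p, h1, h2⟩; omega, fun h => ⟨(a / 2, b / 2), by simp only; omega, by simp only; omega⟩⟩
    classical
    simp only [Set.indicator_apply, r1, r2, r3, r4]
    rcases Int.emod_two_eq_zero_or_one a with ha | ha <;>
    rcases Int.emod_two_eq_zero_or_one b with hb | hb <;>
    simp [ha, hb, Int.add_emod] <;> ring
  have hfin : ∑' p : {p : ℤ × ℤ // p ≠ 0},
        ((((p : ℤ × ℤ).1 : ℝ) ^ 2 + 4 * ((p : ℤ × ℤ).2 : ℝ) ^ 2) ^ 2)⁻¹ = E := by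
    have := tsum_subtype_eq_of_support_subset (f := fun p : ℤ × ℤ => hh (p.1, 2 * p.2)) (s := {p | p ≠ 0}) (by
      rintro p hp rfl
      simp [hh] at hp)
    rw [hE, ← this]
    refine tsum_congr fun p => ?_
    simp only [hh]; push_cast
    congr 2
    ring
  rw [hfin]
  rw [hAdef] at key
  linarith
end

section
/- For every real q ∈ (0,1): E₄(q)³ − E₆(q)² = 1728 · q · ∏_{n=1}^∞ (1 − qⁿ)²⁴. Equivalently, √(E₄(q)³ − 1728·η(q)²⁴) = E₆(q) whenever E₆(q) ≥ 0, where η(q) = q^{1/24}∏_{n=1}^∞(1 − qⁿ). -/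
open Real

/-- `σ₅(n)`, the sum of the fifth powers of the positive divisors of `n`. -/
def sigma5 (n : ℕ) : ℕ := ∑ d ∈ n.divisors, d ^ 5

/-- The Eisenstein series `E₄(q) = 1 + 240·∑_{n=1}^∞ σ₃(n) qⁿ`. -/
noncomputable def E4 (q : ℝ) : ℝ := 1 + 240 * ∑' n : ℕ, (sigma3 (n + 1) : ℝ) * q ^ (n + 1)

/-- The Eisenstein series `E₆(q) = 1 − 504·∑_{n=1}^∞ σ₅(n) qⁿ`. -/
noncomputable def E6 (q : ℝ) : ℝ := 1 - 504 * ∑' n : ℕ, (sigma5 (n + 1) : ℝ) * q ^ (n + 1)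

/-- The Dedekind eta q-series `η(q) = q^{1/24} · ∏_{n=1}^∞ (1 − qⁿ)`. -/
noncomputable def etaQ (q : ℝ) : ℝ := q ^ ((1 : ℝ) / 24) * ∏' n : ℕ, (1 - q ^ (n + 1))

open Complex UpperHalfPlane in
lemma aux_cast_prod (q : ℝ) (h0 : 0 < q) (h1 : q < 1) :
    ((∏' n : ℕ, (1 - q ^ (n + 1)) : ℝ) : ℂ) = ∏' n : ℕ, (1 - (q : ℂ) ^ (n + 1)) := by
  have hm : Multipliable fun n : ℕ => (1 - q ^ (n + 1) : ℝ) := by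
    have := multipliable_one_add_of_summable (R := ℝ) (f := fun n : ℕ => -q ^ (n + 1)) (by
      simpa [abs_of_pos h0] using
        (summable_nat_add_iff 1).mpr (summable_geometric_of_lt_one h0.le h1))
    simpa [sub_eq_add_neg] using this
  have := hm.map_tprod Complex.ofRealHom Complex.continuous_ofReal
  simpa using this

lemma aux_main (q : ℝ) (h0 : 0 < q) (h1 : q < 1) :
    E4 q ^ 3 - E6 q ^ 2 = 1728 * q * (∏' n : ℕ, (1 - q ^ (n + 1))) ^ 24 := by
  have hl : 0 < -Real.log q / (2 * π) := by
    have := Real.log_neg h0 h1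
    have := Real.pi_pos
    apply div_pos <;> linarith
  obtain ⟨z, hz⟩ : ∃ z : UpperHalfPlane, (z : ℂ) = Complex.I * ((-Real.log q / (2 * π) : ℝ) : ℂ) :=
    ⟨⟨Complex.I * ((-Real.log q / (2 * π) : ℝ) : ℂ), by
      rw [Complex.I_mul_im, Complex.ofReal_re]; exact hl⟩, rfl⟩
  have hq : Complex.exp (2 * π * Complex.I * z) = q := by
    have : 2 * (π : ℂ) * Complex.I * z = (Real.log q : ℝ) := by
      rw [hz]
      push_cast
      have : (π : ℂ) ≠ 0 := by exact_mod_cast Real.pi_ne_zero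
      field_simp
      simp
    rw [this, ← Complex.ofReal_exp, Real.exp_log h0]
  have hD := ModularForm.discriminant_eq_E₄_cube_sub_E₆_sq z
  have h4 := EisensteinSeries.q_expansion_bernoulli (k := 4) (by norm_num) (by decide) z
  have h6 := EisensteinSeries.q_expansion_bernoulli (k := 6) (by norm_num) (by decide) z
  have b4 : bernoulli 4 = -1 / 30 := by
    rw [bernoulli_eq_bernoulli'_of_ne_one (by norm_num)]; simp
  have b6 : bernoulli 6 = 1 / 42 := by
    rw [bernoulli_eq_bernoulli'_of_ne_one (by norm_num)]
    rw [bernoulli'_def]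
    have b5 : bernoulli' 5 = 0 := by
      rw [bernoulli'_def]; norm_num [Finset.sum_range_succ, Nat.choose]
    norm_num [Finset.sum_range_succ, Nat.choose, b5]
  have e4 : (ModularForm.E₄ z : ℂ) = (E4 q : ℝ) := by
    refine h4.trans ?_
    rw [tsum_pnat_eq_tsum_succ (f := fun n : ℕ => (ArithmeticFunction.sigma (4 - 1) n : ℂ) *
      Complex.exp (2 * π * Complex.I * z) ^ (n : ℤ)), hq, b4, E4]
    simp only [zpow_natCast]
    push_cast
    simp [sigma3, ArithmeticFunction.sigma_apply]
    norm_num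
  have e6 : (ModularForm.E₆ z : ℂ) = (E6 q : ℝ) := by
    refine h6.trans ?_
    rw [tsum_pnat_eq_tsum_succ (f := fun n : ℕ => (ArithmeticFunction.sigma (6 - 1) n : ℂ) *
      Complex.exp (2 * π * Complex.I * z) ^ (n : ℤ)), hq, b6, E6]
    simp only [zpow_natCast]
    push_cast
    simp [sigma5, ArithmeticFunction.sigma_apply]
    norm_num
  have hd : ModularForm.discriminant z = q * (∏' n : ℕ, (1 - (q : ℂ) ^ (n + 1))) ^ 24 := by
    rw [ModularForm.discriminant, ModularForm.eta, mul_pow]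
    simp only [ModularForm.eta_q_eq_pow, hq]
    have hη : Function.Periodic.qParam 24 (z : ℂ) ^ 24 = q := by
      rw [← hq, Function.Periodic.qParam, ← Complex.exp_nat_mul]
      apply congrArg Complex.exp
      push_cast
      ring
    rw [hη]
  rw [e4, e6, hd, ← aux_cast_prod q h0 h1] at hD
  have : ((E4 q ^ 3 - E6 q ^ 2 : ℝ) : ℂ) =
      ((1728 * q * (∏' n : ℕ, (1 - q ^ (n + 1))) ^ 24 : ℝ) : ℂ) := by
    rw [Complex.ofReal_sub, Complex.ofReal_mul, Complex.ofReal_mul, Complex.ofReal_pow,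
      Complex.ofReal_pow, Complex.ofReal_pow, Complex.ofReal_ofNat]
    linear_combination (-1728) * hD
  exact_mod_cast this

theorem stmt_17 :
    ∀ q ∈ Set.Ioo (0 : ℝ) 1,
      E4 q ^ 3 - E6 q ^ 2 = 1728 * q * (∏' n : ℕ, (1 - q ^ (n + 1))) ^ 24 ∧
      (0 ≤ E6 q → Real.sqrt (E4 q ^ 3 - 1728 * etaQ q ^ 24) = E6 q) := by
  intro q hq
  have hm := aux_main q hq.1 hq.2
  refine ⟨hm, fun h6 => ?_⟩
  have he : etaQ q ^ 24 = q * (∏' n : ℕ, (1 - q ^ (n + 1))) ^ 24 := by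
    rw [etaQ, mul_pow, ← Real.rpow_natCast (q ^ ((1 : ℝ) / 24)), ← Real.rpow_mul hq.1.le]
    norm_num
  rw [he, show E4 q ^ 3 - 1728 * (q * (∏' n : ℕ, (1 - q ^ (n + 1))) ^ 24) = E6 q ^ 2 by
    linear_combination hm]
  exact Real.sqrt_sq h6
end
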